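/- Let g be a seven-dimensional complex Lie algebra with a six-dimensional (complex) abelian ideal u, let e₇ ∈ g∖u, let V₂ and V₄ be complex subspaces of u of dimensions 2 and 4 with u = V₂ ⊕ V₄, and let ω ∈ Λ²V₄* be a nondegenerate complex two-form on V₄. Then g admits a cocalibrated (G₂)_ℂ-structure — i.e. there exists a closed four-form Ψ ∈ Λ⁴g* such that for some basis f¹,…,f⁷ of g*, Ψ = f^{1234}+f^{1256}+f^{3456}−f^{2467}+f^{2357}+f^{1457}+f^{1367} — if and only if ad(e₇)|_u ∈ End(u) is similar under GL(u) to an element of the set S := {f ∈ End(u) : f(V₄) ⊆ V₄ and pr_{V₄}∘f|_{V₄} = −(tr(f₂)/2)·id_{V₄} + f₄ for some f₄ ∈ sp(V₄,ω), where f₂ := pr_{V₂}∘f|_{V₂}}. -/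

import Mathlib

open Module

section AltMachinery

variable {F : Type*} [Field F] {V : Type*} [AddCommGroup V] [Module F V]

/-- The wedge `φ₁ ∧ … ∧ φ_m` of `m` covectors, as an alternating `m`-form on `V`:
`(φ₁ ∧ … ∧ φ_m)(v₁,…,v_m) = det (φ_i (v_j))`. -/
noncomputable def wedgeCov (m : ℕ) (φ : Fin m → Module.Dual F V) :
    V [⋀^Fin m]→ₗ[F] F :=
  (Matrix.detRowAlternating : (Fin m → F) [⋀^Fin m]→ₗ[F] F).compLinearMap
    (LinearMap.pi φ)

/-- A decomposable alternating `m`-form: a wedge of `m` covectors. -/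
def AltDec (m : ℕ) (X : V [⋀^Fin m]→ₗ[F] F) : Prop :=
  ∃ φ : Fin m → Module.Dual F V, X = wedgeCov m φ

/-- The `m`-form `X` is a sum of `l` decomposable `m`-forms. -/
def AltLenLE (m l : ℕ) (X : V [⋀^Fin m]→ₗ[F] F) : Prop :=
  ∃ Y : Fin l → (V [⋀^Fin m]→ₗ[F] F), (∀ i, AltDec m (Y i)) ∧ X = ∑ i, Y i

/-- The `m`-form `X` has length `l`: it is a sum of `l` decomposable `m`-forms and of no
smaller number of them. -/
def AltHasLen (m l : ℕ) (X : V [⋀^Fin m]→ₗ[F] F) : Prop :=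
  AltLenLE m l X ∧ ∀ j < l, ¬ AltLenLE m j X

end AltMachinery

section CE

variable {F : Type*} [Field F] {g : Type*} [LieRing g] [LieAlgebra F g]

/-- The Chevalley–Eilenberg differential of a `(k+1)`-form (given as a function on tuples):
`(dρ)(x₀,…,x_{k+1}) = ∑_{i<j} (-1)^{i+j} ρ(⁅x_i,x_j⁆, x₀,…,x̂_i,…,x̂_j,…,x_{k+1})`. -/
noncomputable def ceDiff (k : ℕ) (ρ : (Fin (k + 1) → g) → F) : (Fin (k + 2) → g) → F :=
  fun x => ∑ i : Fin (k + 2), ∑ j : Fin (k + 2),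
    if h : (i : ℕ) < (j : ℕ) then
      (-1 : F) ^ ((i : ℕ) + (j : ℕ)) *
        ρ (Fin.cons ⁅x i, x j⁆ fun l : Fin k =>
            x (j.succAbove ((⟨(i : ℕ),
              Nat.lt_of_lt_of_le h (Nat.lt_succ_iff.mp j.isLt)⟩ : Fin (k + 1)).succAbove l)))
    else 0

end CE

section G2Forms

variable {F : Type*} [Field F] {g : Type*} [AddCommGroup g] [Module F g]

/-- The wedge `f^i ∧ f^j ∧ f^k ∧ f^l` of four covectors from the basis `b` of `g*`. -/
noncomputable def bw (b : Basis (Fin 7) F (Module.Dual F g)) (i j k l : Fin 7) :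
    g [⋀^Fin 4]→ₗ[F] F :=
  wedgeCov 4 ![b i, b j, b k, b l]

/-- The four-form `f^{1234}+f^{1256}+f^{3456}-f^{2467}+f^{2357}+f^{1457}+f^{1367}` (the
Hodge dual of a `G₂`- resp. `(G₂)_ℂ`-structure), written with `0`-based indices. -/
noncomputable def stdG2 (b : Basis (Fin 7) F (Module.Dual F g)) : g [⋀^Fin 4]→ₗ[F] F :=
  bw b 0 1 2 3 + bw b 0 1 4 5 + bw b 2 3 4 5 - bw b 1 3 5 6 +
    bw b 1 2 4 6 + bw b 0 3 4 6 + bw b 0 2 5 6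

/-- The four-form `f^{1234}-f^{1256}-f^{3456}-f^{2467}+f^{2357}+f^{1457}+f^{1367}` (the
Hodge dual of a `G₂*`-structure), written with `0`-based indices. -/
noncomputable def stdG2star (b : Basis (Fin 7) F (Module.Dual F g)) :
    g [⋀^Fin 4]→ₗ[F] F :=
  bw b 0 1 2 3 - bw b 0 1 4 5 - bw b 2 3 4 5 - bw b 1 3 5 6 +
    bw b 1 2 4 6 + bw b 0 3 4 6 + bw b 0 2 5 6

/-- Membership in `Λ⁴W ⊆ Λ⁴g*` for a subspace `W ⊆ g*`: the span of the wedges of four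
covectors from `W`. -/
def mem4Pow (W : Submodule F (Module.Dual F g)) (Ω : g [⋀^Fin 4]→ₗ[F] F) : Prop :=
  Ω ∈ Submodule.span F
    {Y : g [⋀^Fin 4]→ₗ[F] F |
      ∃ φ : Fin 4 → Module.Dual F g, (∀ i, φ i ∈ W) ∧ Y = wedgeCov 4 φ}

end G2Forms

/-! Let `A = ad e₇|_u` and let `ν` be the covector with kernel `u` and `ν e₇ = 1`. As `u` is
abelian, `⁅x, y⁆ = ν x • ⁅e₇, y⁆ - ν y • ⁅e₇, x⁆`, so `dΨ = -ν ∧ (ad e₇ · Ψ)`, and `Ψ` is closed iff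
`A` annihilates `Ψ|_u` as a derivation. Both sides of the equivalence amount to the existence of a
four-dimensional `A`-invariant subspace of `u` with a symplectic form that `A` scales by `tr A`.

A four-form `η` on `u` annihilated by `A` makes `(α, β) ↦ α ∧ β ∧ η` a skew pairing on `u*` which
`A` scales by `tr A`; it induces such a symplectic form on its range in `u** = u`. For `η = Ψ|_u`
the double cross product identity shows that the rank is at least four. If it is six, then
`tr A = 0` and `A ∈ sp(u)`, and a four-dimensional subspace is found by splitting off an invariant
hyperbolic plane or, when there is none, as the range of `A² - μ` or of `A`.

Conversely, let `c², …, c⁵` be Darboux coordinates on such a subspace `W`, completed by `c⁰, c¹`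
vanishing on `W`. Then `A` annihilates `c⁰ ∧ c¹ ∧ (c² ∧ c³ + c⁴ ∧ c⁵)`, which is the restriction
to `u` of a form of the standard type. -/

section ExteriorAlgebra

variable {R E E' : Type*} [CommRing R] [AddCommGroup E] [Module R E] [AddCommGroup E']
  [Module R E'] {n : ℕ}

/-- Exterior multiplication `ρ ↦ α ∧ ρ` by a covector `α`, bilinear in `α` and `ρ`. -/
noncomputable def covWedge : Dual R E →ₗ[R] E [⋀^Fin n]→ₗ[R] R →ₗ[R] E [⋀^Fin (n + 1)]→ₗ[R] R :=
  LinearMap.mk₂ R (fun α ρ ↦ AlternatingMap.alternatizeUncurryFin (α.smulRight ρ))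
    (fun α β ρ ↦ by
      rw [← AlternatingMap.alternatizeUncurryFin_add]
      congr 1; ext; simp [add_mul])
    (fun c α ρ ↦ by
      rw [← AlternatingMap.alternatizeUncurryFin_smul]
      congr 1; ext; simp [mul_assoc])
    (fun α ρ σ ↦ by
      rw [← AlternatingMap.alternatizeUncurryFin_add]
      congr 1; ext; simp)
    (fun c α ρ ↦ by
      rw [← AlternatingMap.alternatizeUncurryFin_smul]
      congr 1; ext; simp [mul_left_comm])

theorem covWedge_apply (α : Dual R E) (ρ : E [⋀^Fin n]→ₗ[R] R) (x : Fin (n + 1) → E) :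
    covWedge α ρ x =
      ∑ i : Fin (n + 1), (-1) ^ (i : ℕ) * (α (x i) * ρ (i.removeNth x)) := by
  simp [covWedge, AlternatingMap.alternatizeUncurryFin_apply, zsmul_eq_mul]

theorem covWedge_covWedge_self (α : Dual R E) (ρ : E [⋀^Fin n]→ₗ[R] R) :
    covWedge α (covWedge α ρ) = 0 := by
  have h := AlternatingMap.alternatizeUncurryFin_alternatizeUncurryFinLM_comp_of_symmetric
    (R := R) (f := α.smulRight (α.smulRight ρ)) (fun x y ↦ by
      ext; simp [mul_left_comm])
  convert h using 1
  simp only [covWedge, LinearMap.mk₂_apply]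
  congr 1
  ext x : 1
  simp

theorem covWedge_swap (α β : Dual R E) (ρ : E [⋀^Fin n]→ₗ[R] R) :
    covWedge α (covWedge β ρ) = -covWedge β (covWedge α ρ) := by
  have h := covWedge_covWedge_self (α + β) ρ
  simp only [map_add, LinearMap.add_apply, covWedge_covWedge_self, zero_add, add_zero] at h
  exact eq_neg_of_add_eq_zero_right h

theorem compLinearMap_covWedge (A : E →ₗ[R] E') (α : Dual R E') (ρ : E' [⋀^Fin n]→ₗ[R] R) :
    (covWedge α ρ).compLinearMap A = covWedge (α ∘ₗ A) (ρ.compLinearMap A) := by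
  ext x
  simp only [AlternatingMap.compLinearMap_apply, covWedge_apply]
  rfl

/-- The action of an endomorphism `A` on alternating forms as a derivation,
`(A · ρ)(x₀, …, xₙ) = ∑ᵢ ρ(x₀, …, A xᵢ, …, xₙ)`. -/
noncomputable def derivAct (A : E →ₗ[R] E) (ρ : E [⋀^Fin (n + 1)]→ₗ[R] R) :
    E [⋀^Fin (n + 1)]→ₗ[R] R :=
  AlternatingMap.alternatizeUncurryFin (ρ.curryLeft ∘ₗ A)

theorem derivAct_apply_removeNth (A : E →ₗ[R] E) (ρ : E [⋀^Fin (n + 1)]→ₗ[R] R)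
    (x : Fin (n + 1) → E) :
    derivAct A ρ x =
      ∑ i : Fin (n + 1), (-1) ^ (i : ℕ) * ρ (Fin.cons (A (x i)) (i.removeNth x)) := by
  simp only [derivAct, AlternatingMap.alternatizeUncurryFin_apply, LinearMap.comp_apply,
    AlternatingMap.curryLeft_apply_apply, zsmul_eq_mul]
  push_cast
  rfl

theorem derivAct_apply (A : E →ₗ[R] E) (ρ : E [⋀^Fin (n + 1)]→ₗ[R] R) (x : Fin (n + 1) → E) :
    derivAct A ρ x = ∑ i, ρ (Function.update x i (A (x i))) := by
  rw [derivAct_apply_removeNth]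
  refine Finset.sum_congr rfl fun i _ ↦ ?_
  have h := AlternatingMap.map_insertNth ρ i (A (x i)) (i.removeNth x)
  rw [Fin.insertNth_removeNth] at h
  rw [h, zsmul_eq_mul]
  push_cast
  rfl

theorem derivAct_covWedge (A : E →ₗ[R] E) (α : Dual R E) (ρ : E [⋀^Fin (n + 1)]→ₗ[R] R) :
    derivAct A (covWedge α ρ) = covWedge (α ∘ₗ A) ρ + covWedge α (derivAct A ρ) := by
  ext x
  simp only [derivAct_apply, AlternatingMap.add_apply, covWedge_apply, LinearMap.comp_apply]
  rw [Finset.sum_comm, ← Finset.sum_add_distrib]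
  refine Finset.sum_congr rfl fun i _ ↦ ?_
  rw [Fin.sum_univ_succAbove _ i, Finset.mul_sum, Finset.mul_sum]
  simp [Function.update_of_ne, Fin.removeNth_update, Fin.removeNth_update_succAbove,
    Fin.removeNth_apply]

theorem compLinearMap_derivAct {A : E →ₗ[R] E} {A' : E' →ₗ[R] E'} {j : E →ₗ[R] E'}
    (hj : ∀ x, j (A x) = A' (j x)) (ρ : E' [⋀^Fin (n + 1)]→ₗ[R] R) :
    (derivAct A' ρ).compLinearMap j = derivAct A (ρ.compLinearMap j) := by
  ext x
  rw [AlternatingMap.compLinearMap_apply, derivAct_apply, derivAct_apply]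
  refine Finset.sum_congr rfl fun i _ ↦ ?_
  rw [← hj, AlternatingMap.compLinearMap_apply]
  exact congrArg ρ (Function.comp_update j x i (A (x i))).symm

theorem derivAct_basis (A : E →ₗ[R] E) (e : Basis (Fin (n + 1)) R E)
    (μ : E [⋀^Fin (n + 1)]→ₗ[R] R) : derivAct A μ e = LinearMap.trace R E A * μ e := by
  rw [derivAct_apply, LinearMap.trace_eq_matrix_trace R e, Matrix.trace, Finset.sum_mul]
  refine Finset.sum_congr rfl fun i _ ↦ ?_
  conv_lhs => rw [← e.sum_repr (A (e i))]
  rw [μ.map_update_sum, Finset.sum_eq_single i]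
  · rw [μ.map_update_smul, Function.update_eq_self, smul_eq_mul, Matrix.diag_apply,
      LinearMap.toMatrix_apply]
  · intro j _ hj
    rw [μ.map_update_smul, μ.map_update_self _ hj.symm, smul_zero]
  · simp

end ExteriorAlgebra

section ExteriorField

variable {K E : Type*} [Field K] [AddCommGroup E] [Module K E] {n : ℕ}

theorem wedgeCov_apply (φ : Fin n → Dual K E) (x : Fin n → E) :
    wedgeCov n φ x = (Matrix.of fun i j ↦ φ j (x i)).det :=
  rfl

theorem covWedge_wedgeCov (α : Dual K E) (φ : Fin n → Dual K E) :
    covWedge α (wedgeCov n φ) = wedgeCov (n + 1) (Matrix.vecCons α φ) := by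
  ext x
  rw [covWedge_apply, wedgeCov_apply, Matrix.det_succ_column_zero]
  refine Finset.sum_congr rfl fun i _ ↦ ?_
  rw [mul_assoc]
  rfl

theorem exists_basis_finCons_ker (α : Dual K E) {e : E} (he : α e = 1)
    (b : Basis (Fin n) K (LinearMap.ker α)) :
    ∃ e' : Basis (Fin (n + 1)) K E, ⇑e' = Fin.cons e fun i ↦ (b i : E) := by
  refine ⟨Basis.mkFinCons e b (fun c x hx hc ↦ ?_) (fun z ↦ ⟨-α z, ?_⟩), Basis.coe_mkFinCons ..⟩
  · simpa [he, LinearMap.mem_ker.mp hx] using congrArg α hc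
  · simp [he]

theorem covWedge_eq_zero_of_forall_ker [FiniteDimensional K E] {α : Dual K E}
    {ρ : E [⋀^Fin n]→ₗ[K] K} (h : ∀ x : Fin n → E, (∀ i, α (x i) = 0) → ρ x = 0) :
    covWedge α ρ = 0 := by
  obtain rfl | hα := eq_or_ne α 0
  · simp
  obtain ⟨e, he⟩ : ∃ e, α e = 1 := LinearMap.surjective hα 1
  obtain ⟨b, hb⟩ := exists_basis_finCons_ker α he (Module.finBasis K (LinearMap.ker α))
  have hker : ∀ j, j ≠ 0 → α (b j) = 0 := by
    intro j hj
    obtain ⟨k, rfl⟩ := Fin.exists_succ_eq.mpr hj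
    simp [hb]
  refine b.ext_alternating fun v hv ↦ ?_
  rw [covWedge_apply, AlternatingMap.zero_apply]
  refine Finset.sum_eq_zero fun i _ ↦ ?_
  obtain hi | hi := eq_or_ne (v i) 0
  · have h0 : ρ (i.removeNth fun j ↦ b (v j)) = 0 :=
      h _ fun j ↦ hker _ fun hj ↦ i.succAbove_ne j (hv (hj.trans hi.symm))
    rw [h0, mul_zero, mul_zero]
  · rw [hker _ hi, zero_mul, mul_zero]

theorem compLinearMap_eq_zero_iff_covWedge_eq_zero [FiniteDimensional K E] {E' : Type*}
    [AddCommGroup E'] [Module K E'] {α : Dual K E} (hα : α ≠ 0) {j : E' →ₗ[K] E}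
    (hj : LinearMap.range j = LinearMap.ker α) {ρ : E [⋀^Fin n]→ₗ[K] K} :
    ρ.compLinearMap j = 0 ↔ covWedge α ρ = 0 := by
  constructor <;> intro h
  · refine covWedge_eq_zero_of_forall_ker fun x hx ↦ ?_
    choose y hy using fun i ↦ LinearMap.mem_range.mp (hj.ge (LinearMap.mem_ker.mpr (hx i)))
    rw [← funext hy]
    exact DFunLike.congr_fun h y
  · obtain ⟨e, he⟩ : ∃ e, α e = 1 := LinearMap.surjective hα 1
    ext y
    have hker : ∀ i, α (j (y i)) = 0 := fun i ↦ LinearMap.mem_ker.mp (hj.le ⟨y i, rfl⟩)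
    have h' := DFunLike.congr_fun h (Fin.cons e (j ∘ y))
    rw [covWedge_apply, Fin.sum_univ_succ, Finset.sum_eq_zero fun i _ ↦ by simp [hker]] at h'
    simpa [he, Function.comp_def] using h'

theorem covWedge_apply_eq_zero_of_mem [FiniteDimensional K E] {α : Dual K E}
    {ρ : E [⋀^Fin n]→ₗ[K] K} {p : Submodule K E}
    (h : ∀ x : Fin n → E, (∀ i, x i ∈ p ∧ α (x i) = 0) → ρ x = 0)
    {x : Fin (n + 1) → E} (hx : ∀ i, x i ∈ p) : covWedge α ρ x = 0 := by
  have h' : covWedge (α ∘ₗ p.subtype) (ρ.compLinearMap p.subtype) = 0 :=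
    covWedge_eq_zero_of_forall_ker fun y hy ↦ h _ fun i ↦ ⟨(y i).2, hy i⟩
  rw [← compLinearMap_covWedge] at h'
  exact DFunLike.congr_fun h' fun i ↦ ⟨x i, hx i⟩

end ExteriorField

section ChevalleyEilenberg

variable {K g : Type*} [Field K] [LieRing g] {k : ℕ}

theorem ceDiff_apply_eq_sum_Ici (ρ : (Fin (k + 1) → g) → K) (x : Fin (k + 2) → g) :
    ceDiff k ρ x = -∑ i : Fin (k + 1), ∑ j ∈ Finset.Ici i, (-1) ^ (i + j : ℕ) *
      ρ (Fin.cons ⁅x i.castSucc, x j.succ⁆ (j.removeNth (i.castSucc.removeNth x))) := by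
  have hlast : ∀ j : Fin (k + 2), ¬((Fin.last (k + 1) : Fin (k + 2)) : ℕ) < j := fun j ↦
    not_lt.mpr (Fin.le_last j)
  rw [ceDiff, Fin.sum_univ_castSucc, ← Finset.sum_neg_distrib,
    Finset.sum_eq_zero fun j _ ↦ dif_neg (hlast j), add_zero]
  refine Finset.sum_congr rfl fun i _ ↦ ?_
  rw [Fin.sum_univ_succ, dif_neg (by simp), zero_add, ← Finset.sum_neg_distrib,
    ← Finset.sum_subset (Finset.subset_univ (Finset.Ici i))
      fun j _ hj ↦ dif_neg (by simpa [Nat.lt_succ_iff] using hj)]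
  refine Finset.sum_congr rfl fun j hj ↦ ?_
  rw [Finset.mem_Ici] at hj
  have hij : (i.castSucc : ℕ) < (j.succ : ℕ) := by simpa [Nat.lt_succ_iff] using hj
  have htail : (fun l ↦ x (j.succ.succAbove
      ((⟨(i.castSucc : ℕ), i.isLt⟩ : Fin (k + 1)).succAbove l))) =
      j.removeNth (i.castSucc.removeNth x) := by
    rw [Fin.removeNth_removeNth_eq_swap, Fin.succAbove_of_le_castSucc _ _ (by simpa using hj),
      Fin.predAbove_of_le_castSucc _ _ (by simpa using hj)]
    rfl
  rw [dif_pos hij, htail, Fin.val_castSucc, Fin.val_succ, ← add_assoc, pow_succ, mul_neg_one,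
    neg_mul]

theorem ceDiff_eq_neg_covWedge_derivAct [LieAlgebra K g] {ν : Dual K g} {D : g →ₗ[K] g}
    (hbr : ∀ x y : g, ⁅x, y⁆ = ν x • D y - ν y • D x) (ρ : g [⋀^Fin (k + 1)]→ₗ[K] K) :
    ceDiff k ρ = -⇑(covWedge ν (derivAct D ρ)) := by
  ext x
  have hwedge : AlternatingMap.alternatizeUncurryFin
      (AlternatingMap.alternatizeUncurryFinLM ∘ₗ ν.smulRight (ρ.curryLeft ∘ₗ D)) =
      covWedge ν (derivAct D ρ) := by
    simp only [covWedge, LinearMap.mk₂_apply, derivAct]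
    congr 1
    ext y : 1
    simp
  rw [Pi.neg_apply, ceDiff_apply_eq_sum_Ici, ← hwedge,
    AlternatingMap.alternatizeUncurryFin_alternatizeUncurryFinLM_comp_apply]
  congr 1
  refine Finset.sum_congr rfl fun i _ ↦ Finset.sum_congr rfl fun j _ ↦ ?_
  rw [hbr]
  change _ * ρ.curryLeft (ν (x i.castSucc) • D (x j.succ) - ν (x j.succ) • D (x i.castSucc)) _ = _
  simp [zsmul_eq_mul]

theorem ceDiff_eq_zero_iff [LieAlgebra K g] [FiniteDimensional K g] {V : Type*} [AddCommGroup V]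
    [Module K V] {ν : Dual K g} (hν : ν ≠ 0) {D : g →ₗ[K] g}
    (hbr : ∀ x y : g, ⁅x, y⁆ = ν x • D y - ν y • D x) {j : V →ₗ[K] g}
    (hj : LinearMap.range j = LinearMap.ker ν) {A : V →ₗ[K] V} (hA : ∀ x, j (A x) = D (j x))
    (ρ : g [⋀^Fin (k + 1)]→ₗ[K] K) :
    ceDiff k ρ = 0 ↔ derivAct A (ρ.compLinearMap j) = 0 := by
  rw [ceDiff_eq_neg_covWedge_derivAct hbr, neg_eq_zero, ← compLinearMap_derivAct hA,
    compLinearMap_eq_zero_iff_covWedge_eq_zero hν hj]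
  exact DFunLike.coe_injective.eq_iff' rfl

end ChevalleyEilenberg

section Symplectic

variable {K E E' : Type*} [Field K] [AddCommGroup E] [Module K E]

theorem two_mul_finrank_le_of_le_orthogonal [FiniteDimensional K E] {ω : LinearMap.BilinForm K E}
    (hnd : ω.Nondegenerate) {W : Submodule K E} (hW : W ≤ ω.orthogonal W) :
    2 * finrank K W ≤ finrank K E := by
  have hle := Submodule.finrank_mono hW
  rw [LinearMap.BilinForm.finrank_orthogonal hnd] at hle
  have := Submodule.finrank_le W
  omega

section HyperbolicPlane

variable {ω : LinearMap.BilinForm K E} {x y : E}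

theorem disjoint_span_pair_orthogonal (hω : ω.IsAlt) (hxy : ω x y ≠ 0) :
    Disjoint (Submodule.span K {x, y}) (ω.orthogonal (Submodule.span K {x, y})) := by
  rw [Submodule.disjoint_def]
  rintro z hz hz'
  obtain ⟨a, b, rfl⟩ := Submodule.mem_span_pair.mp hz
  rw [LinearMap.BilinForm.mem_orthogonal_iff] at hz'
  have hx := hz' x (Submodule.subset_span (by simp))
  have hy := hz' y (Submodule.subset_span (by simp))
  have hyx : ω y x ≠ 0 := by rwa [← hω.neg_eq, neg_ne_zero]
  simp only [map_add, map_smul, smul_eq_mul, hω x, hω y, mul_zero, zero_add, add_zero,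
    mul_eq_zero, hxy, hyx, or_false] at hx hy
  simp [hx, hy]

theorem finrank_span_pair_of_apply_ne_zero (hω : ω.IsAlt) (hxy : ω x y ≠ 0) :
    finrank K (Submodule.span K {x, y}) = 2 := by
  have hli : LinearIndependent K ![x, y] := by
    refine LinearIndependent.pair_iff.mpr fun a b h ↦ ?_
    have hx := congrArg (ω x) h
    have hy := congrArg (fun z ↦ ω z y) h
    simp only [map_add, map_smul, map_zero, smul_eq_mul, LinearMap.add_apply, LinearMap.smul_apply,
      LinearMap.zero_apply, hω x, hω y, mul_zero, zero_add, add_zero, mul_eq_zero, hxy,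
      or_false] at hx hy
    exact ⟨hy, hx⟩
  rw [← Matrix.range_cons_cons_empty x y ![], finrank_span_eq_card hli, Fintype.card_fin]

variable [FiniteDimensional K E]

theorem nondegenerate_restrict_orthogonal_span_pair (hω : ω.IsAlt) (hnd : ω.Nondegenerate)
    (hxy : ω x y ≠ 0) : (ω.restrict (ω.orthogonal (Submodule.span K {x, y}))).Nondegenerate := by
  refine LinearMap.BilinForm.nondegenerate_restrict_of_disjoint_orthogonal ω hω.isRefl ?_
  rw [LinearMap.BilinForm.orthogonal_orthogonal hnd hω.isRefl]
  exact (disjoint_span_pair_orthogonal hω hxy).symm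

theorem finrank_orthogonal_span_pair (hω : ω.IsAlt) (hnd : ω.Nondegenerate) (hxy : ω x y ≠ 0) :
    finrank K (ω.orthogonal (Submodule.span K {x, y})) + 2 = finrank K E := by
  have h := Submodule.finrank_le (Submodule.span K {x, y})
  rw [finrank_span_pair_of_apply_ne_zero hω hxy] at h
  rw [LinearMap.BilinForm.finrank_orthogonal hnd, finrank_span_pair_of_apply_ne_zero hω hxy]
  omega

end HyperbolicPlane

theorem linearIndependent_of_det_gram_ne_zero {ι : Type*} [Fintype ι] [DecidableEq ι]
    (ω : LinearMap.BilinForm K E) {v : ι → E}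
    (h : (Matrix.of fun i j ↦ ω (v i) (v j)).det ≠ 0) : LinearIndependent K v := by
  rw [Fintype.linearIndependent_iff]
  intro c hc
  refine congrFun (Matrix.eq_zero_of_vecMul_eq_zero h ?_)
  ext j
  simpa [Matrix.vecMul, dotProduct] using congrArg (fun z ↦ ω z (v j)) hc

theorem exists_symplectic_family [FiniteDimensional K E] {ω : LinearMap.BilinForm K E}
    (hω : ω.IsAlt) (hnd : ω.Nondegenerate) :
    ∃ (n : ℕ) (p q : Fin n → E), finrank K E = n + n ∧ (∀ i j, ω (p i) (p j) = 0) ∧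
      (∀ i j, ω (q i) (q j) = 0) ∧ ∀ i j, ω (q i) (p j) = if i = j then 1 else 0 := by
  induction hd : finrank K E using Nat.strong_induction_on generalizing E with
  | _ d ih =>
  subst hd
  rcases subsingleton_or_nontrivial E with hE | hE
  · exact ⟨0, Fin.elim0, Fin.elim0, by simp [finrank_zero_of_subsingleton], by simp⟩
  obtain ⟨y, hy⟩ := exists_ne (0 : E)
  obtain ⟨x, hyx⟩ : ∃ x, ω y x = 1 := by
    obtain ⟨z, hz⟩ := not_forall.mp (mt (hnd.1 y) hy)
    exact ⟨(ω y z)⁻¹ • z, by simp [inv_mul_cancel₀ hz]⟩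
  have hyx' : ω y x ≠ 0 := by simp [hyx]
  set C := ω.orthogonal (Submodule.span K {y, x})
  have hC : ∀ z : C, ω y z = 0 ∧ ω x z = 0 := fun z ↦
    ⟨z.2 y (Submodule.subset_span (by simp)), z.2 x (Submodule.subset_span (by simp))⟩
  have hC' : ∀ z : C, ω z y = 0 ∧ ω z x = 0 := fun z ↦
    ⟨hω.isRefl _ _ (hC z).1, hω.isRefl _ _ (hC z).2⟩
  have hdim : finrank K C + 2 = finrank K E := finrank_orthogonal_span_pair hω hnd hyx'
  obtain ⟨n, p, q, hn, hpp, hqq, hqp⟩ := ih (finrank K C) (by omega) (ω := ω.restrict C)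
    (fun z ↦ hω z) (nondegenerate_restrict_orthogonal_span_pair hω hnd hyx') rfl
  refine ⟨n + 1, Fin.cons x fun i ↦ p i, Fin.cons y fun i ↦ q i, by omega, ?_, ?_, ?_⟩ <;>
    simp only [LinearMap.BilinForm.restrict_apply, LinearMap.domRestrict_apply] at hpp hqq hqp <;>
    simp [Fin.forall_fin_succ, hω x, hω y, hyx, hC, hC', hpp, hqq, hqp, (Fin.succ_ne_zero _).symm]

theorem exists_basis_toMatrix_eq_J [FiniteDimensional K E] {ω : LinearMap.BilinForm K E}
    (hω : ω.IsAlt) (hnd : ω.Nondegenerate) :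
    ∃ (n : ℕ) (b : Basis (Fin n ⊕ Fin n) K E),
      LinearMap.BilinForm.toMatrix b ω = Matrix.J (Fin n) K := by
  obtain ⟨n, p, q, hn, hpp, hqq, hqp⟩ := exists_symplectic_family hω hnd
  have hgram : (Matrix.of fun i j ↦ ω (Sum.elim p q i) (Sum.elim p q j)) = Matrix.J (Fin n) K := by
    ext (i | i) (j | j)
    · simp [Matrix.J, hpp]
    · simp [Matrix.J, ← hω.neg_eq (q j), hqp, Matrix.one_apply, eq_comm]
    · simp [Matrix.J, hqp, Matrix.one_apply]
    · simp [Matrix.J, hqq]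
  have hli : LinearIndependent K (Sum.elim p q) := by
    refine linearIndependent_of_det_gram_ne_zero ω ?_
    rw [hgram]
    exact (Matrix.isUnit_det_J (Fin n) K).ne_zero
  refine ⟨n, basisOfLinearIndependentOfCardEqFinrank' _ hli (by simp [hn]), ?_⟩
  rw [← hgram]
  ext i j
  simp [LinearMap.BilinForm.toMatrix_apply]

theorem exists_linearEquiv_isometry [FiniteDimensional K E] [AddCommGroup E'] [Module K E']
    [FiniteDimensional K E'] {ω : LinearMap.BilinForm K E} {ω' : LinearMap.BilinForm K E'}
    (hω : ω.IsAlt) (hnd : ω.Nondegenerate) (hω' : ω'.IsAlt) (hnd' : ω'.Nondegenerate)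
    (hdim : finrank K E = finrank K E') : ∃ φ : E ≃ₗ[K] E', ∀ x y, ω' (φ x) (φ y) = ω x y := by
  obtain ⟨n, b, hb⟩ := exists_basis_toMatrix_eq_J hω hnd
  obtain ⟨m, b', hb'⟩ := exists_basis_toMatrix_eq_J hω' hnd'
  obtain rfl : n = m := by
    rw [finrank_eq_card_basis b, finrank_eq_card_basis b'] at hdim
    simp only [Fintype.card_sum, Fintype.card_fin] at hdim
    omega
  refine ⟨b.equiv b' (Equiv.refl _), fun x y ↦ ?_⟩
  have h : ω'.comp (b.equiv b' (Equiv.refl _)).toLinearMap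
      (b.equiv b' (Equiv.refl _)).toLinearMap = ω := by
    refine LinearMap.BilinForm.ext_basis b fun i j ↦ ?_
    rw [← LinearMap.BilinForm.toMatrix_apply, ← LinearMap.BilinForm.toMatrix_apply, hb, ← hb']
    simp [LinearMap.BilinForm.toMatrix_apply]
  exact congrArg (fun B ↦ B x y) h

end Symplectic

section ConformallySymplectic

variable {K E E' : Type*} [Field K] [AddCommGroup E] [Module K E] [AddCommGroup E'] [Module K E']

/-- The endomorphism `A` is infinitesimally conformally symplectic with factor `t`: it scales some
nondegenerate alternating bilinear form by `t`. For `t = 0` this says `A ∈ sp(E, ω)` for some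
`ω`. -/
def IsConfSymplectic (A : Module.End K E) (t : K) : Prop :=
  ∃ ω : LinearMap.BilinForm K E, ω.IsAlt ∧ ω.Nondegenerate ∧
    ∀ x y, ω (A x) y + ω x (A y) = t * ω x y

/-- The endomorphism `A` has an invariant subspace of dimension `d` on which it is infinitesimally
conformally symplectic with factor `t`. -/
def HasConfSymplecticSubspace (A : Module.End K E) (d : ℕ) (t : K) : Prop :=
  ∃ (W : Submodule K E) (hW : ∀ x ∈ W, A x ∈ W), finrank K W = d ∧
    IsConfSymplectic (A.restrict hW) t

variable {A : Module.End K E} {A' : Module.End K E'} {d : ℕ} {t : K}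

theorem IsConfSymplectic.of_linearEquiv (h : IsConfSymplectic A' t) (φ : E ≃ₗ[K] E')
    (hφ : ∀ x, φ (A x) = A' (φ x)) : IsConfSymplectic A t := by
  obtain ⟨ω, hω, hnd, hA⟩ := h
  refine ⟨ω.congr φ.symm, fun x ↦ hω (φ x), hnd.congr φ.symm, fun x y ↦ ?_⟩
  simpa [hφ] using hA (φ x) (φ y)

theorem IsConfSymplectic.hasConfSymplecticSubspace_of_injective (h : IsConfSymplectic A' t)
    {j : E' →ₗ[K] E} (hj : Function.Injective j) (hjA : ∀ x, j (A' x) = A (j x)) :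
    HasConfSymplecticSubspace A (finrank K E') t := by
  refine ⟨LinearMap.range j, ?_, LinearMap.finrank_range_of_inj hj, ?_⟩
  · rintro _ ⟨x, rfl⟩
    exact ⟨A' x, hjA x⟩
  · refine h.of_linearEquiv (LinearEquiv.ofInjective j hj).symm fun x ↦ ?_
    obtain ⟨y, rfl⟩ := (LinearEquiv.ofInjective j hj).surjective x
    rw [LinearEquiv.symm_apply_apply, LinearEquiv.symm_apply_eq]
    exact Subtype.ext (hjA y).symm

theorem HasConfSymplecticSubspace.map (h : HasConfSymplecticSubspace A' d t)
    {j : E' →ₗ[K] E} (hj : Function.Injective j) (hjA : ∀ x, j (A' x) = A (j x)) :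
    HasConfSymplecticSubspace A d t := by
  obtain ⟨W, hW, rfl, h⟩ := h
  exact h.hasConfSymplecticSubspace_of_injective (j := j ∘ₗ W.subtype)
    (hj.comp W.subtype_injective) fun x ↦ hjA x

theorem HasConfSymplecticSubspace.isConfSymplectic [FiniteDimensional K E]
    (h : HasConfSymplecticSubspace A (finrank K E) t) : IsConfSymplectic A t := by
  obtain ⟨W, hW, hd, h⟩ := h
  obtain rfl := Submodule.eq_top_of_finrank_eq hd
  exact h.of_linearEquiv Submodule.topEquiv.symm fun x ↦ rfl

theorem hasConfSymplecticSubspace_finrank_range [FiniteDimensional K E] {B : E' →ₗ[K] E}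
    {p : LinearMap.BilinForm K E'} (hp : p.IsAlt) (hker : LinearMap.ker p = LinearMap.ker B)
    (hA : ∀ x y, p (A' x) y + p x (A' y) = t * p x y) (hB : ∀ x, A (B x) = B (A' x)) :
    HasConfSymplecticSubspace A (finrank K (LinearMap.range B)) t := by
  have hW : ∀ x ∈ LinearMap.range B, A x ∈ LinearMap.range B := by
    rintro _ ⟨x, rfl⟩
    exact ⟨A' x, (hB x).symm⟩
  obtain ⟨s, hs⟩ := B.rangeRestrict.exists_rightInverse_of_surjective B.range_rangeRestrict
  have hBs : ∀ w, B (s w) = w := fun w ↦ congrArg Subtype.val (LinearMap.congr_fun hs w)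
  have hpB : ∀ {x x'}, B x = B x' → p x = p x' := fun {x x'} h ↦ by
    rw [← LinearMap.sub_mem_ker_iff, hker, LinearMap.sub_mem_ker_iff, h]
  have hpB' : ∀ {y y'}, B y = B y' → ∀ x, p x y = p x y' := fun {y y'} h x ↦ by
    rw [← hp.neg_eq y x, ← hp.neg_eq y' x, hpB h]
  have hAs : ∀ w, B (s (A.restrict hW w)) = B (A' (s w)) := fun w ↦ by
    rw [hBs, ← hB, hBs, LinearMap.coe_restrict_apply]
  have halt : (p.comp s s).IsAlt := fun w ↦ hp (s w)
  refine ⟨_, hW, rfl, p.comp s s, halt, ?_, fun w z ↦ ?_⟩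
  · refine halt.isRefl.nondegenerate_iff_separatingLeft.mpr fun w hw ↦ Subtype.ext ?_
    rw [← hBs w]
    refine LinearMap.mem_ker.mp (hker ▸ LinearMap.mem_ker.mpr (LinearMap.ext fun y ↦ ?_))
    rw [hpB' (hBs (B.rangeRestrict y)).symm]
    exact hw _
  · simp only [LinearMap.BilinForm.comp_apply, hpB (hAs w), hpB' (hAs z), hA]

theorem IsConfSymplectic.even_finrank [FiniteDimensional K E] (h : IsConfSymplectic A t) :
    Even (finrank K E) := by
  obtain ⟨ω, hω, hnd, -⟩ := h
  obtain ⟨n, b, -⟩ := exists_basis_toMatrix_eq_J hω hnd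
  exact ⟨n, by simp [finrank_eq_card_basis b]⟩

theorem HasConfSymplecticSubspace.even [FiniteDimensional K E]
    (h : HasConfSymplecticSubspace A d t) : Even d := by
  obtain ⟨W, hW, rfl, h⟩ := h
  exact h.even_finrank

theorem IsConfSymplectic.two_mul_trace [FiniteDimensional K E] (h : IsConfSymplectic A t) :
    2 * LinearMap.trace K E A = finrank K E * t := by
  obtain ⟨ω, -, hnd, hA⟩ := h
  have hconj : (ω.toDual hnd).conj A =
      (t • LinearMap.id - Dual.transpose (R := K) A : Module.End K (Dual K E)) := by
    refine LinearMap.ext fun φ ↦ ?_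
    obtain ⟨x, rfl⟩ := (ω.toDual hnd).surjective φ
    ext y
    rw [LinearEquiv.conj_apply_apply, LinearEquiv.symm_apply_apply]
    simpa [LinearMap.BilinForm.toDual_def, Dual.transpose_apply, eq_sub_iff_add_eq] using hA x y
  have htr := congrArg (LinearMap.trace K (Dual K E)) hconj
  rw [LinearMap.trace_conj', map_sub (LinearMap.trace K (Dual K E)), map_smul,
    LinearMap.trace_id, LinearMap.trace_transpose', Subspace.dual_finrank_eq, smul_eq_mul] at htr
  linear_combination htr

end ConformallySymplectic

section ReductionToDimensionFour

variable {K E E' E'' : Type*} [Field K] [AddCommGroup E] [Module K E] [AddCommGroup E']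
  [Module K E'] [AddCommGroup E''] [Module K E'']

theorem finrank_ker_comp_le [FiniteDimensional K E] [FiniteDimensional K E'] (g : E' →ₗ[K] E'')
    (f : E →ₗ[K] E') : finrank K (LinearMap.ker (g ∘ₗ f)) ≤
      finrank K (LinearMap.ker f) + finrank K (LinearMap.ker g) := by
  let f' := f.domRestrict (LinearMap.ker (g ∘ₗ f))
  have hker : finrank K (LinearMap.ker f') ≤ finrank K (LinearMap.ker f) := by
    rw [LinearMap.ker_domRestrict, ← Submodule.finrank_map_subtype_eq]
    exact Submodule.finrank_mono (Submodule.map_comap_le _ _)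
  have hrange : finrank K (LinearMap.range f') ≤ finrank K (LinearMap.ker g) :=
    Submodule.finrank_mono (LinearMap.range_le_iff_comap.mpr (Submodule.eq_top_iff'.mpr (·.2)))
  rw [← LinearMap.finrank_range_add_finrank_ker f']
  omega

theorem exists_symmetric_nondegenerate [FiniteDimensional K E] :
    ∃ g : LinearMap.BilinForm K E, (∀ x y, g x y = g y x) ∧ g.SeparatingLeft := by
  let b := Module.finBasis K E
  have hsymm : b.toDual = LinearMap.flip b.toDual := LinearMap.BilinForm.ext_basis b fun i j ↦ by
    simp [Basis.toDual_apply, eq_comm]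
  exact ⟨b.toDual, fun x y ↦ LinearMap.congr_fun₂ hsymm x y,
    LinearMap.separatingLeft_iff_ker_eq_bot.mpr b.toDual_ker⟩

theorem isConfSymplectic_zero_of_ker_eq_range [FiniteDimensional K E] {N : Module.End K E}
    (hN : LinearMap.ker N = LinearMap.range N) : IsConfSymplectic N 0 := by
  obtain ⟨g, hg, hgnd⟩ := exists_symmetric_nondegenerate (K := K) (E := LinearMap.ker N)
  obtain ⟨C, hC⟩ := (LinearMap.ker N).exists_isCompl
  let P := (LinearMap.ker N).projectionOnto C hC
  have hNN : ∀ x, N x ∈ LinearMap.ker N := fun x ↦ hN ▸ LinearMap.mem_range_self N x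
  let N' : E →ₗ[K] LinearMap.ker N := N.codRestrict _ hNN
  have hP : ∀ x : LinearMap.ker N, P x = x := Submodule.projectionOnto_apply_left hC
  have hN'ker : ∀ x : LinearMap.ker N, N' x = 0 := fun x ↦ Subtype.ext x.2
  have hN'surj : Function.Surjective N' := fun y ↦ by
    obtain ⟨x, hx⟩ : (y : E) ∈ LinearMap.range N := hN ▸ y.2
    exact ⟨x, Subtype.ext hx⟩
  let ω : LinearMap.BilinForm K E := g.compl₁₂ P N' - g.compl₁₂ N' P
  have hω : ∀ x y, ω x y = g (P x) (N' y) - g (N' x) (P y) := fun x y ↦ rfl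
  have halt : ω.IsAlt := fun x ↦ by rw [hω, hg, sub_self]
  refine ⟨ω, halt, halt.isRefl.nondegenerate_iff_separatingLeft.mpr fun x hx ↦ ?_, fun x y ↦ ?_⟩
  · have hN'x : N' x = 0 := hgnd _ fun y ↦ by simpa [hω, hN'ker, hP] using hx y
    have hxker : x ∈ LinearMap.ker N := congrArg Subtype.val hN'x
    have hPx : P x = 0 := hgnd _ fun y ↦ by
      obtain ⟨z, rfl⟩ := hN'surj y
      simpa [hω, hN'x] using hx z
    simpa [hP ⟨x, hxker⟩] using hPx
  · have hPN : ∀ z, P (N z) = N' z := fun z ↦ hP (N' z)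
    have hNN' : ∀ z, N' (N z) = 0 := fun z ↦ hN'ker (N' z)
    simp [hω, hPN, hNN']

theorem hasConfSymplecticSubspace_of_ker_eq_range_mul_self [FiniteDimensional K E]
    {A : Module.End K E} (hA : LinearMap.ker A = LinearMap.range (A * A)) :
    HasConfSymplecticSubspace A (finrank K (LinearMap.range A)) 0 := by
  refine ⟨LinearMap.range A, fun x _ ↦ LinearMap.mem_range_self A x, rfl,
    isConfSymplectic_zero_of_ker_eq_range ?_⟩
  ext ⟨x, y, rfl⟩
  have h : A y ∈ LinearMap.ker A ↔ A y ∈ LinearMap.range (A * A) := by rw [hA]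
  simpa [Subtype.ext_iff, LinearMap.mem_range] using h

variable {ω : LinearMap.BilinForm K E} {A : Module.End K E} {t : K}

theorem apply_apply_eq_zero_of_mem_eigenspace (h2 : (2 : K) ≠ 0) (hω : ω.IsAlt)
    (hA : ∀ x y, ω (A x) y = -ω x (A y))
    (hplane : ∀ x y, A x ∈ Submodule.span K {x, y} → A y ∈ Submodule.span K {x, y} → ω x y = 0)
    {μ : K} {x y : E}
    (hx : x ∈ Module.End.eigenspace (A * A) μ) (hy : y ∈ Module.End.eigenspace (A * A) μ) :
    ω x (A y) = 0 := by
  have hdiag : ∀ z ∈ Module.End.eigenspace (A * A) μ, ω z (A z) = 0 := fun z hz ↦ by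
    rw [Module.End.mem_eigenspace_iff] at hz
    refine hplane z (A z) (Submodule.subset_span (by simp)) ?_
    exact Submodule.mem_span_pair.mpr ⟨μ, 0, by simpa using hz.symm⟩
  have hadd := hdiag (x + y) (add_mem hx hy)
  simp only [map_add, LinearMap.add_apply, hdiag x hx, hdiag y hy] at hadd
  have hsymm : ω y (A x) = ω x (A y) := by rw [← hω.neg_eq, hA, neg_neg]
  refine (mul_eq_zero.mp ?_).resolve_left h2
  linear_combination hadd - hsymm

variable [FiniteDimensional K E]

theorem hasConfSymplecticSubspace_of_invariant_plane (hω : ω.IsAlt) (hnd : ω.Nondegenerate)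
    (hA : ∀ x y, ω (A x) y + ω x (A y) = t * ω x y) {x y : E} (hxy : ω x y ≠ 0)
    (hx : A x ∈ Submodule.span K {x, y}) (hy : A y ∈ Submodule.span K {x, y}) :
    HasConfSymplecticSubspace A (finrank K E - 2) t := by
  have hP : ∀ p ∈ Submodule.span K {x, y}, A p ∈ Submodule.span K {x, y} := fun p hp ↦ by
    obtain ⟨a, b, rfl⟩ := Submodule.mem_span_pair.mp hp
    rw [map_add, map_smul, map_smul]
    exact add_mem (Submodule.smul_mem _ a hx) (Submodule.smul_mem _ b hy)
  refine ⟨ω.orthogonal (Submodule.span K {x, y}), fun z hz p hp ↦ ?_, ?_, _, fun z ↦ hω z,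
    nondegenerate_restrict_orthogonal_span_pair hω hnd hxy, fun z w ↦ hA z w⟩
  · have h := hA p z
    rwa [hz p hp, hz _ (hP p hp), zero_add, mul_zero] at h
  · rw [← finrank_orthogonal_span_pair hω hnd hxy, Nat.add_sub_cancel]

theorem hasConfSymplecticSubspace_range_of_commute (hnd : ω.Nondegenerate)
    (hA : ∀ x y, ω (A x) y + ω x (A y) = t * ω x y) {q : Module.End K E}
    (hq : ∀ x, ω (q x) x = 0) (hqA : Commute A q) :
    HasConfSymplecticSubspace A (finrank K (LinearMap.range q)) t := by
  have hcomm : ∀ x, A (q x) = q (A x) := LinearMap.congr_fun hqA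
  refine hasConfSymplecticSubspace_finrank_range (p := ω ∘ₗ q) (A' := A) hq ?_ (fun x y ↦ ?_) hcomm
  · exact LinearMap.ker_comp_of_ker_eq_bot q (LinearMap.separatingLeft_iff_ker_eq_bot.mp hnd.1)
  · simpa [hcomm] using hA (q x) y

theorem hasConfSymplecticSubspace_range_mul_self_sub_smul (hω : ω.IsAlt) (hnd : ω.Nondegenerate)
    (hA : ∀ x y, ω (A x) y = -ω x (A y)) (μ : K) :
    HasConfSymplecticSubspace A (finrank K (LinearMap.range (A * A - μ • 1))) 0 := by
  refine hasConfSymplecticSubspace_range_of_commute hnd (fun x y ↦ ?_) (fun x ↦ ?_) ?_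
  · rw [hA, neg_add_cancel, zero_mul]
  · simp [hA (A x), hω (A x), hω x]
  · exact ((Commute.refl A).mul_right (Commute.refl A)).sub_right
      ((Commute.one_right A).smul_right μ)

theorem orthogonal_ker_eq_range (hnd : ω.Nondegenerate) {L : Module.End K E} {s : K} (hs : s ≠ 0)
    (hL : ∀ x y, ω (L x) y = s * ω x (L y)) :
    ω.orthogonal (LinearMap.ker L) = LinearMap.range L := by
  refine (Submodule.eq_of_le_of_finrank_le ?_ ?_).symm
  · rintro _ ⟨y, rfl⟩ x hx
    have h := hL x y
    rw [LinearMap.mem_ker.mp hx, map_zero, LinearMap.zero_apply] at h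
    exact (mul_eq_zero.mp h.symm).resolve_left hs
  · rw [LinearMap.BilinForm.finrank_orthogonal hnd, ← LinearMap.finrank_range_add_finrank_ker L,
      Nat.add_sub_cancel]

theorem two_mul_finrank_eigenspace_le (h2 : (2 : K) ≠ 0) (hω : ω.IsAlt) (hnd : ω.Nondegenerate)
    (hA : ∀ x y, ω (A x) y = -ω x (A y))
    (hplane : ∀ x y, A x ∈ Submodule.span K {x, y} → A y ∈ Submodule.span K {x, y} → ω x y = 0)
    {μ : K} (hμ : μ ≠ 0) :
    2 * finrank K (Module.End.eigenspace (A * A) μ) ≤ finrank K E := by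
  refine two_mul_finrank_le_of_le_orthogonal hnd fun y hy x hx ↦ ?_
  have hAy : A y ∈ Module.End.eigenspace (A * A) μ := by
    rw [Module.End.mem_eigenspace_iff] at hy ⊢
    simpa using congrArg A hy
  have h := apply_apply_eq_zero_of_mem_eigenspace h2 hω hA hplane hx hAy
  rw [← Module.End.mul_apply, Module.End.mem_eigenspace_iff.mp hy, map_smul, smul_eq_mul] at h
  exact (mul_eq_zero.mp h).resolve_left hμ

theorem ker_eq_range_mul_self (h2 : (2 : K) ≠ 0) (hω : ω.IsAlt) (hnd : ω.Nondegenerate)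
    (hA : ∀ x y, ω (A x) y = -ω x (A y))
    (hplane : ∀ x y, A x ∈ Submodule.span K {x, y} → A y ∈ Submodule.span K {x, y} → ω x y = 0)
    (hdim : 2 * finrank K E ≤ 3 * finrank K (LinearMap.ker (A * A))) :
    LinearMap.ker A = LinearMap.range (A * A) := by
  have hle : LinearMap.ker A ≤ LinearMap.range (A * A) := fun v hv ↦ by
    have hv' : v ∈ ω.orthogonal (LinearMap.ker A) := fun x hx ↦
      hplane x v (by simp [LinearMap.mem_ker.mp hx]) (by simp [LinearMap.mem_ker.mp hv])
    rw [orthogonal_ker_eq_range hnd (neg_ne_zero.mpr one_ne_zero)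
      fun x y ↦ by rw [hA, neg_one_mul]] at hv'
    obtain ⟨w, rfl⟩ := hv'
    rw [← orthogonal_ker_eq_range hnd one_ne_zero fun x y ↦ by simp [hA]]
    rw [← Module.End.eigenspace_zero]
    refine fun x hx ↦ apply_apply_eq_zero_of_mem_eigenspace h2 hω hA hplane hx ?_
    rwa [Module.End.eigenspace_zero]
  have hker := finrank_ker_comp_le A A
  have hrank := LinearMap.finrank_range_add_finrank_ker (A * A)
  rw [← Module.End.mul_eq_comp] at hker
  exact Submodule.eq_of_le_of_finrank_le hle (by omega)

theorem IsConfSymplectic.hasConfSymplecticSubspace_four [IsAlgClosed K] (h2 : (2 : K) ≠ 0)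
    (hE : finrank K E = 6) (hA : IsConfSymplectic A 0) : HasConfSymplecticSubspace A 4 0 := by
  obtain ⟨ω, hω, hnd, hωA⟩ := hA
  have hskew : ∀ x y, ω (A x) y = -ω x (A y) := fun x y ↦
    eq_neg_of_add_eq_zero_left (by simpa using hωA x y)
  by_contra hno
  have hplane : ∀ x y, A x ∈ Submodule.span K {x, y} → A y ∈ Submodule.span K {x, y} →
      ω x y = 0 := fun x y hx hy ↦ by
    by_contra hxy
    have h := hasConfSymplecticSubspace_of_invariant_plane hω hnd hωA hxy hx hy
    rw [hE] at h
    exact hno h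
  have : Nontrivial E := Module.nontrivial_of_finrank_pos (R := K) (by omega)
  obtain ⟨μ, hμ⟩ := Module.End.exists_eigenvalue (A * A)
  have hpos : 0 < finrank K (Module.End.eigenspace (A * A) μ) :=
    Submodule.one_le_finrank_iff.mpr hμ
  have hker : 4 ≤ finrank K (Module.End.eigenspace (A * A) μ) := by
    have hq := hasConfSymplecticSubspace_range_mul_self_sub_smul hω hnd hskew μ
    have hrank := LinearMap.finrank_range_add_finrank_ker (A * A - μ • 1)
    rw [← Module.End.eigenspace_def, hE] at hrank
    obtain ⟨r, hr⟩ := hq.even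
    by_contra hlt
    have hr4 : finrank K (LinearMap.range (A * A - μ • 1)) = 4 := by omega
    exact hno (hr4 ▸ hq)
  obtain rfl | hμ0 := eq_or_ne μ 0
  · rw [Module.End.eigenspace_zero] at hker
    have hA2 := ker_eq_range_mul_self h2 hω hnd hskew hplane (by omega)
    have hrank := LinearMap.finrank_range_add_finrank_ker A
    have hrank2 := LinearMap.finrank_range_add_finrank_ker (A * A)
    have hle := finrank_ker_comp_le A A
    rw [← Module.End.mul_eq_comp] at hle
    rw [← hA2] at hrank2
    have hrange : finrank K (LinearMap.range A) = 4 := by omega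
    exact hno (hrange ▸ hasConfSymplecticSubspace_of_ker_eq_range_mul_self hA2)
  · have := two_mul_finrank_eigenspace_le h2 hω hnd hskew hplane hμ0
    omega

end ReductionToDimensionFour

section WedgePairing

variable {R E : Type*} [CommRing R] [AddCommGroup E] [Module R E] {n : ℕ}

/-- The pairing `(α, β) ↦ (α ∧ β ∧ η)(e)` on covectors. When `e` is a basis, the form `η` has
codegree two and `e` identifies top-degree forms with scalars. -/
noncomputable def wedgePairing (η : E [⋀^Fin n]→ₗ[R] R) (e : Fin (n + 2) → E) :
    LinearMap.BilinForm R (Dual R E) :=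
  LinearMap.mk₂ R (fun α β ↦ covWedge α (covWedge β η) e) (by simp) (by simp) (by simp) (by simp)

theorem wedgePairing_isAlt (η : E [⋀^Fin n]→ₗ[R] R) (e : Fin (n + 2) → E) :
    (wedgePairing η e).IsAlt := fun α ↦ by
  simp [wedgePairing, covWedge_covWedge_self]

theorem wedgePairing_comp_add_wedgePairing_comp {A : End R E} {η : E [⋀^Fin (n + 1)]→ₗ[R] R}
    (hη : derivAct A η = 0) (e : Basis (Fin (n + 3)) R E) (α β : Dual R E) :
    wedgePairing η e (α ∘ₗ A) β + wedgePairing η e α (β ∘ₗ A) =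
      LinearMap.trace R E A * wedgePairing η e α β := by
  simp only [wedgePairing, LinearMap.mk₂_apply]
  rw [← derivAct_basis, derivAct_covWedge, derivAct_covWedge, hη]
  simp

theorem hasConfSymplecticSubspace_of_derivAct_eq_zero {K : Type*} [Field K] [Module K E]
    {A : End K E} {η : E [⋀^Fin (n + 1)]→ₗ[K] K} (hη : derivAct A η = 0)
    (e : Basis (Fin (n + 3)) K E) :
    HasConfSymplecticSubspace A (finrank K (LinearMap.range (wedgePairing η e)))
      (LinearMap.trace K E A) := by
  have := e.finiteDimensional_of_finite
  let p := wedgePairing η e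
  have hp := wedgePairing_comp_add_wedgePairing_comp hη e
  let B : Dual K E →ₗ[K] E := (evalEquiv K E).symm ∘ₗ p
  have hB (α β : Dual K E) : β (B α) = p α β := apply_evalEquiv_symm_apply K E β (p α)
  let A' : End K (Dual K E) := LinearMap.trace K E A • 1 - Dual.transpose (R := K) A
  have hA' (α : Dual K E) : A' α = LinearMap.trace K E A • α - α ∘ₗ A := rfl
  have hrange : finrank K (LinearMap.range B) = finrank K (LinearMap.range p) := by
    rw [LinearMap.range_comp, LinearEquiv.finrank_map_eq]
  rw [← hrange]
  refine hasConfSymplecticSubspace_finrank_range (A' := A') (wedgePairing_isAlt η e)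
    (LinearEquiv.ker_comp _ _).symm (fun α β ↦ ?_) fun α ↦ ?_
  · simp only [hA', map_sub, map_smul, LinearMap.sub_apply, LinearMap.smul_apply, smul_eq_mul]
    linear_combination -hp α β
  · refine sub_eq_zero.mp ((Module.forall_dual_apply_eq_zero_iff K _).mp fun β ↦ ?_)
    have hBA : β (A (B α)) = p α (β ∘ₗ A) := hB α (β ∘ₗ A)
    rw [map_sub, hBA, hB, hA', map_sub, map_smul]
    simp only [LinearMap.sub_apply, LinearMap.smul_apply, smul_eq_mul]
    linear_combination hp α β

end WedgePairing

section CrossProduct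

variable {K E : Type*} [Field K] [AddCommGroup E] [Module K E]

theorem exists_basis_apply_eq_ite [FiniteDimensional K E] {ι : Type*} [Finite ι] [DecidableEq ι]
    (b : Basis ι K (Dual K E)) : ∃ e : Basis ι K E, ∀ i j, b i (e j) = if i = j then 1 else 0 := by
  refine ⟨b.dualBasis.map (evalEquiv K E).symm, fun i j ↦ ?_⟩
  rw [Basis.map_apply, apply_evalEquiv_symm_apply, Basis.coe_dualBasis, Basis.coord_apply,
    Basis.repr_self, Finsupp.single_apply]

theorem wedgeCov_append_apply {m n : ℕ} {b : Fin (m + n) → Dual K E} {e : Fin (m + n) → E}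
    (hbe : ∀ i j, b i (e j) = if i = j then 1 else 0) (σ : Equiv.Perm (Fin (m + n)))
    (φ : Fin m → Dual K E) :
    wedgeCov (m + n) (Fin.append φ fun j ↦ b (σ (Fin.natAdd m j))) e =
      Equiv.Perm.sign σ • wedgeCov m φ fun i ↦ e (σ (Fin.castAdd n i)) := by
  set μ := wedgeCov (m + n) (Fin.append φ fun j ↦ b (σ (Fin.natAdd m j)))
  have hblock : μ (e ∘ σ) = wedgeCov m φ fun i ↦ e (σ (Fin.castAdd n i)) := by
    set M := Matrix.submatrix (Matrix.of fun i j ↦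
      Fin.append φ (fun j ↦ b (σ (Fin.natAdd m j))) j ((e ∘ σ) i)) finSumFinEquiv finSumFinEquiv
    have h11 : M.toBlocks₁₁ = Matrix.of fun i j ↦ φ j (e (σ (Fin.castAdd n i))) := by
      ext i j
      simp [M, Matrix.toBlocks₁₁]
    have h12 : M.toBlocks₁₂ = 0 := by
      ext i j
      have hij : Fin.castAdd n i ≠ Fin.natAdd m j := by
        rw [Ne, Fin.ext_iff, Fin.val_castAdd, Fin.val_natAdd]
        omega
      simp [M, Matrix.toBlocks₁₂, hbe, hij.symm]
    have h22 : M.toBlocks₂₂ = 1 := by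
      ext i j
      simp [M, Matrix.toBlocks₂₂, hbe, Matrix.one_apply, eq_comm]
    calc μ (e ∘ σ) = M.det := (Matrix.det_submatrix_equiv_self finSumFinEquiv _).symm
      _ = _ := by
        rw [← M.fromBlocks_toBlocks, h12, h22, h11, Matrix.det_fromBlocks_zero₁₂, Matrix.det_one,
          mul_one, wedgeCov_apply]
  rw [← hblock, AlternatingMap.map_perm, smul_smul, Int.units_mul_self, one_smul]

/-- The matrix of the (complexified octonion) cross product `n × ·` on `K⁷`, in the coordinates
in which `stdG2` is the standard four-form. -/
def crossMatrix {R : Type*} [CommRing R] (n : Fin 7 → R) : Matrix (Fin 7) (Fin 7) R :=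
  !![0, n 6, n 4, -n 5, -n 2, n 3, -n 1;
     -n 6, 0, -n 5, -n 4, n 3, n 2, n 0;
     -n 4, n 5, 0, n 6, n 0, -n 1, -n 3;
     n 5, n 4, -n 6, 0, -n 1, -n 0, n 2;
     n 2, -n 3, -n 0, n 1, 0, n 6, -n 5;
     -n 3, -n 2, n 1, n 0, -n 6, 0, n 4;
     n 1, -n 0, n 3, -n 2, n 5, -n 4, 0]

theorem covWedge_covWedge_covWedge_bw_apply {b : Basis (Fin 7) K (Dual K E)} {e : Fin 7 → E}
    (hbe : ∀ i j, b i (e j) = if i = j then 1 else 0) {σ : Fin 7 → Fin 7} (hσ : σ.Bijective)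
    (hsign : Equiv.Perm.sign (.ofBijective σ hσ) = 1) (α β γ : Dual K E) :
    covWedge α (covWedge β (covWedge γ (bw b (σ 3) (σ 4) (σ 5) (σ 6)))) e =
      α (e (σ 0)) * β (e (σ 1)) * γ (e (σ 2)) - α (e (σ 0)) * γ (e (σ 1)) * β (e (σ 2)) -
        β (e (σ 0)) * α (e (σ 1)) * γ (e (σ 2)) + β (e (σ 0)) * γ (e (σ 1)) * α (e (σ 2)) +
        γ (e (σ 0)) * α (e (σ 1)) * β (e (σ 2)) - γ (e (σ 0)) * β (e (σ 1)) * α (e (σ 2)) := by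
  have hwedge : covWedge α (covWedge β (covWedge γ (bw b (σ 3) (σ 4) (σ 5) (σ 6)))) =
      wedgeCov (3 + 4)
        (Fin.append ![α, β, γ] fun j ↦ b (Equiv.ofBijective σ hσ (Fin.natAdd 3 j))) := by
    rw [bw, covWedge_wedgeCov, covWedge_wedgeCov, covWedge_wedgeCov]
    congr 1
    ext i : 1
    fin_cases i <;> rfl
  have hs : Equiv.Perm.sign (α := Fin (3 + 4)) (.ofBijective σ hσ) = 1 := hsign
  rw [hwedge, wedgeCov_append_apply hbe, hs, one_smul, wedgeCov_apply ![α, β, γ],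
    Matrix.det_fin_three]
  rfl

theorem covWedge_covWedge_covWedge_stdG2_apply {b : Basis (Fin 7) K (Dual K E)} {e : Fin 7 → E}
    (hbe : ∀ i j, b i (e j) = if i = j then 1 else 0) (α β γ : Dual K E) :
    covWedge α (covWedge β (covWedge γ (stdG2 b))) e =
      (α ∘ e) ⬝ᵥ (crossMatrix (γ ∘ e)).mulVec (β ∘ e) := by
  have h (σ : Fin 7 → Fin 7) (hσ : σ.Bijective)
      (hsign : Equiv.Perm.sign (.ofBijective σ hσ) = 1) :=
    covWedge_covWedge_covWedge_bw_apply hbe hσ hsign α β γ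
  have h0123 := h ![4, 5, 6, 0, 1, 2, 3] (by decide) (by decide +kernel)
  have h0145 := h ![2, 3, 6, 0, 1, 4, 5] (by decide) (by decide +kernel)
  have h2345 := h ![0, 1, 6, 2, 3, 4, 5] (by decide) (by decide +kernel)
  have h1356 := h ![2, 0, 4, 1, 3, 5, 6] (by decide) (by decide +kernel)
  have h1246 := h ![3, 0, 5, 1, 2, 4, 6] (by decide) (by decide +kernel)
  have h0346 := h ![2, 1, 5, 0, 3, 4, 6] (by decide) (by decide +kernel)
  have h0256 := h ![3, 1, 4, 0, 2, 5, 6] (by decide) (by decide +kernel)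
  simp only [stdG2, map_add, map_sub, AlternatingMap.add_apply, AlternatingMap.sub_apply]
  simp only [Matrix.cons_val, Matrix.cons_val_zero, Matrix.cons_val_one]
    at h0123 h0145 h2345 h1356 h1246 h0346 h0256
  simp only [h0123, h0145, h2345, h1356, h1246, h0346, h0256, crossMatrix, Matrix.mulVec,
    dotProduct, Fin.sum_univ_seven, Matrix.of_apply, Matrix.cons_val, Function.comp_apply]
  ring

end CrossProduct

section Cross7

variable {K : Type*} [Field K]

theorem crossMatrix_mulVec_swap (n v : Fin 7 → K) :
    (crossMatrix v).mulVec n = -(crossMatrix n).mulVec v := by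
  ext i
  fin_cases i <;>
    simp only [crossMatrix, Matrix.mulVec, dotProduct, Fin.sum_univ_seven, Matrix.of_apply,
      Matrix.cons_val, Fin.zero_eta, Fin.mk_one, Fin.reduceFinMk, Pi.neg_apply] <;>
    ring

theorem crossMatrix_mulVec_mulVec (n v : Fin 7 → K) :
    (crossMatrix n).mulVec ((crossMatrix n).mulVec v) = (n ⬝ᵥ v) • n - (n ⬝ᵥ n) • v := by
  ext i
  fin_cases i <;>
    simp only [crossMatrix, Matrix.mulVec, dotProduct, Fin.sum_univ_seven, Matrix.of_apply,
      Matrix.cons_val, Fin.zero_eta, Fin.mk_one, Fin.reduceFinMk, Pi.sub_apply, Pi.smul_apply,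
      smul_eq_mul] <;>
    ring

theorem nondegenerate_dotProductBilin {ι : Type*} [Fintype ι] :
    (dotProductBilin K K : LinearMap.BilinForm K (ι → K)).Nondegenerate :=
  ⟨fun _ h ↦ dotProduct_eq_zero _ h, fun w h ↦ dotProduct_eq_zero w fun v ↦ by
    rw [dotProduct_comm]
    exact h v⟩

theorem finrank_ker_crossMatrix_le (h2 : (2 : K) ≠ 0) {n : Fin 7 → K} (hn : n ≠ 0) :
    finrank K (LinearMap.ker (crossMatrix n).mulVecLin) ≤ 3 := by
  have hker : ∀ v ∈ LinearMap.ker (crossMatrix n).mulVecLin, (n ⬝ᵥ n) • v = (n ⬝ᵥ v) • n := by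
    intro v hv
    have h := crossMatrix_mulVec_mulVec n v
    rw [show (crossMatrix n).mulVec v = 0 from hv, Matrix.mulVec_zero] at h
    exact (sub_eq_zero.mp h.symm).symm
  have hker' : ∀ v ∈ LinearMap.ker (crossMatrix n).mulVecLin, (v ⬝ᵥ v) • n = (v ⬝ᵥ n) • v := by
    intro v hv
    have h := crossMatrix_mulVec_mulVec v n
    rw [crossMatrix_mulVec_swap n v, show (crossMatrix n).mulVec v = 0 from hv, neg_zero,
      Matrix.mulVec_zero] at h
    exact (sub_eq_zero.mp h.symm).symm
  by_cases hnn : n ⬝ᵥ n = 0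
  · have hnv : ∀ v ∈ LinearMap.ker (crossMatrix n).mulVecLin, n ⬝ᵥ v = 0 := fun v hv ↦ by
      simpa [hnn, hn] using (hker v hv).symm
    have hvv : ∀ v ∈ LinearMap.ker (crossMatrix n).mulVecLin, v ⬝ᵥ v = 0 := fun v hv ↦ by
      simpa [dotProduct_comm v n, hnv v hv, hn] using hker' v hv
    have hiso := two_mul_finrank_le_of_le_orthogonal (W := LinearMap.ker (crossMatrix n).mulVecLin)
      (nondegenerate_dotProductBilin (K := K) (ι := Fin 7)) fun v hv w hw ↦ ?_
    · rw [Module.finrank_fin_fun] at hiso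
      omega
    change w ⬝ᵥ v = 0
    have h := hvv _ (add_mem hv hw)
    rw [add_dotProduct, dotProduct_add, dotProduct_add, hvv v hv, hvv w hw, dotProduct_comm v w,
      zero_add, add_zero, ← two_mul] at h
    exact (mul_eq_zero.mp h).resolve_left h2
  · refine (Submodule.finrank_mono (t := K ∙ n) fun v hv ↦ ?_).trans
      ((finrank_span_singleton hn).le.trans (by norm_num))
    exact Submodule.mem_span_singleton.mpr ⟨(n ⬝ᵥ n)⁻¹ * (n ⬝ᵥ v), by
      rw [mul_smul, ← hker v hv, smul_smul, inv_mul_cancel₀ hnn, one_smul]⟩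

end Cross7

section Rank

variable {K E V : Type*} [Field K] [AddCommGroup E] [Module K E] [AddCommGroup V] [Module K V]

theorem covWedge_covWedge_covWedge_eq_zero_of_wedgePairing_eq_zero [FiniteDimensional K E] {n : ℕ}
    {Ψ : E [⋀^Fin n]→ₗ[K] K} {α β ν : Dual K E} (hν : ν ≠ 0) {j : V →ₗ[K] E}
    (hj : LinearMap.range j = LinearMap.ker ν) (e : Basis (Fin (n + 2)) K V)
    (h : wedgePairing (Ψ.compLinearMap j) e (α ∘ₗ j) (β ∘ₗ j) = 0) :
    covWedge β (covWedge α (covWedge ν Ψ)) = 0 := by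
  have hV : (covWedge α (covWedge β Ψ)).compLinearMap j = 0 := by
    rw [← AlternatingMap.map_basis_eq_zero_iff e, compLinearMap_covWedge, compLinearMap_covWedge]
    exact h
  have hE := (compLinearMap_eq_zero_iff_covWedge_eq_zero hν hj).mp hV
  rwa [covWedge_swap ν α, covWedge_swap ν β, map_neg, neg_neg, covWedge_swap, neg_eq_zero] at hE

theorem four_le_finrank_range_wedgePairing_stdG2 (h2 : (2 : K) ≠ 0)
    (b : Basis (Fin 7) K (Dual K E)) {ν : Dual K E} (hν : ν ≠ 0) {j : V →ₗ[K] E}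
    (hj : LinearMap.range j = LinearMap.ker ν) (e : Basis (Fin (4 + 2)) K V) :
    4 ≤ finrank K (LinearMap.range (wedgePairing ((stdG2 b).compLinearMap j) e)) := by
  have : FiniteDimensional K (Dual K E) := b.finiteDimensional_of_finite
  have : FiniteDimensional K E := (finite_dual_iff K).mp this
  have : FiniteDimensional K V := e.finiteDimensional_of_finite
  obtain ⟨e', hbe⟩ := exists_basis_apply_eq_ite b
  have hΨ := covWedge_covWedge_covWedge_stdG2_apply hbe
  generalize stdG2 b = Ψ at hΨ ⊢
  let p := wedgePairing (Ψ.compLinearMap j) e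
  let r : Dual K E →ₗ[K] Dual K V := Dual.transpose (R := K) j
  let c : Dual K E ≃ₗ[K] (Fin 7 → K) := (e'.constr K).symm
  have hker : LinearMap.ker (p ∘ₗ r) ≤
      (LinearMap.ker (crossMatrix (ν ∘ e')).mulVecLin).comap (c : Dual K E →ₗ[K] Fin 7 → K) := by
    intro α hα
    refine dotProduct_eq_zero _ fun v ↦ ?_
    obtain ⟨β, rfl⟩ := c.surjective v
    have hβ : covWedge β (covWedge α (covWedge ν Ψ)) = 0 :=
      covWedge_covWedge_covWedge_eq_zero_of_wedgePairing_eq_zero hν hj e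
        (LinearMap.congr_fun (LinearMap.mem_ker.mp hα) (r β))
    have h := hΨ β α ν
    rw [hβ, AlternatingMap.zero_apply] at h
    rw [dotProduct_comm]
    exact h.symm
  have hle := Submodule.finrank_mono hker
  rw [Submodule.comap_equiv_eq_map_symm, LinearEquiv.finrank_map_eq] at hle
  have hn : ν ∘ e' ≠ 0 := fun h ↦ hν (e'.ext fun i ↦ congrFun h i)
  have h3 := finrank_ker_crossMatrix_le h2 hn
  have hrank := (p ∘ₗ r).finrank_range_add_finrank_ker
  rw [finrank_eq_card_basis b, Fintype.card_fin] at hrank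
  have hrange := Submodule.finrank_mono (LinearMap.range_comp_le_range r p)
  change 4 ≤ finrank K (LinearMap.range p)
  omega

theorem hasConfSymplecticSubspace_four_of_derivAct_stdG2_eq_zero [IsAlgClosed K]
    (h2 : (2 : K) ≠ 0) (b : Basis (Fin 7) K (Dual K E)) {ν : Dual K E} (hν : ν ≠ 0) {j : V →ₗ[K] E}
    (hj : LinearMap.range j = LinearMap.ker ν) (hV : finrank K V = 6) {A : End K V}
    (hA : derivAct A ((stdG2 b).compLinearMap j) = 0) :
    HasConfSymplecticSubspace A 4 (LinearMap.trace K V A) := by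
  have : FiniteDimensional K V := .of_finrank_pos (by omega)
  let e : Basis (Fin (4 + 2)) K V := finBasisOfFinrankEq K V hV
  have h := hasConfSymplecticSubspace_of_derivAct_eq_zero (n := 3) hA e
  have hge := four_le_finrank_range_wedgePairing_stdG2 h2 b hν hj e
  have hle := LinearMap.finrank_range_le (wedgePairing ((stdG2 b).compLinearMap j) e)
  rw [Subspace.dual_finrank_eq, hV] at hle
  generalize finrank K (LinearMap.range (wedgePairing ((stdG2 b).compLinearMap j) e)) = r at *
  obtain ⟨m, rfl⟩ := h.even
  obtain hm | hm : m + m = 4 ∨ m + m = finrank K V := by omega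
  · rwa [hm] at h
  rw [hm] at h
  have htr := h.isConfSymplectic.two_mul_trace
  have h0 : LinearMap.trace K V A = 0 := by
    have : 2 * (2 * LinearMap.trace K V A) = 0 := by
      rw [hV] at htr
      push_cast at htr
      linear_combination -htr
    simpa [h2] using this
  rw [h0] at h ⊢
  exact h.isConfSymplectic.hasConfSymplecticSubspace_four h2 hV

end Rank

section NormalForm

variable {K E V : Type*} [Field K] [AddCommGroup E] [Module K E] [AddCommGroup V] [Module K V]

theorem mem_span_singleton_of_comp_eq_zero {ν α : Dual K E} {j : V →ₗ[K] E}
    (hj : LinearMap.range j = LinearMap.ker ν) (hα : α ∘ₗ j = 0) : α ∈ K ∙ ν := by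
  rw [← Set.range_const (ι := Unit)]
  refine mem_span_of_iInf_ker_le_ker ?_
  rw [iInf_const, ← hj]
  exact LinearMap.range_le_ker_iff.mpr hα

theorem eq_top_of_mem_of_map_dualMap_eq_top {ν : Dual K E} {j : V →ₗ[K] E}
    (hj : LinearMap.range j = LinearMap.ker ν) {S : Submodule K (Dual K E)} (hν : ν ∈ S)
    (hS : S.map j.dualMap = ⊤) : S = ⊤ := by
  have hker : LinearMap.ker j.dualMap ≤ S := fun α hα ↦
    (Submodule.span_singleton_le_iff_mem ν S).mpr hν (mem_span_singleton_of_comp_eq_zero hj hα)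
  rw [← Submodule.comap_map_eq_self hker, hS, Submodule.comap_top]

theorem wedgeCov_four_apply (α β γ δ : Dual K E) (x : Fin 4 → E) :
    wedgeCov 4 ![α, β, γ, δ] x =
      (α (x 0) * β (x 1) - α (x 1) * β (x 0)) * (γ (x 2) * δ (x 3) - γ (x 3) * δ (x 2)) -
      (α (x 0) * β (x 2) - α (x 2) * β (x 0)) * (γ (x 1) * δ (x 3) - γ (x 3) * δ (x 1)) +
      (α (x 0) * β (x 3) - α (x 3) * β (x 0)) * (γ (x 1) * δ (x 2) - γ (x 2) * δ (x 1)) +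
      (α (x 1) * β (x 2) - α (x 2) * β (x 1)) * (γ (x 0) * δ (x 3) - γ (x 3) * δ (x 0)) -
      (α (x 1) * β (x 3) - α (x 3) * β (x 1)) * (γ (x 0) * δ (x 2) - γ (x 2) * δ (x 0)) +
      (α (x 2) * β (x 3) - α (x 3) * β (x 2)) * (γ (x 0) * δ (x 1) - γ (x 1) * δ (x 0)) := by
  rw [wedgeCov_apply, Matrix.det_succ_row_zero]
  simp only [Fin.sum_univ_four, Matrix.det_fin_three, Matrix.submatrix_apply, Matrix.of_apply,
    Matrix.cons_val, Fin.succAbove, Fin.castSucc_zero, Fin.castSucc_one, Fin.succ_zero_eq_one,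
    Fin.succ_one_eq_two, Fin.reduceSucc, Fin.reduceCastSucc, Fin.reduceLT, lt_self_iff_false,
    ↓reduceIte, Fin.coe_ofNat_eq_mod]
  ring

theorem compLinearMap_stdG2_eq {I : K} (hI : I * I = -1) {j : V →ₗ[K] E}
    {b : Basis (Fin 7) K (Dual K E)} {c : Fin 6 → Dual K V}
    (h : ∀ x, (fun i ↦ b i (j x)) = ![c 0 x + I * c 2 x, c 1 x - I * c 3 x, c 2 x, c 3 x, c 4 x,
      c 5 x, I * c 5 x]) :
    (stdG2 b).compLinearMap j =
      wedgeCov 4 ![c 0, c 1, c 2, c 3] + wedgeCov 4 ![c 0, c 1, c 4, c 5] := by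
  have h0 (x : V) : b 0 (j x) = c 0 x + I * c 2 x := congrFun (h x) 0
  have h1 (x : V) : b 1 (j x) = c 1 x - I * c 3 x := congrFun (h x) 1
  have h2 (x : V) : b 2 (j x) = c 2 x := congrFun (h x) 2
  have h3 (x : V) : b 3 (j x) = c 3 x := congrFun (h x) 3
  have h4 (x : V) : b 4 (j x) = c 4 x := congrFun (h x) 4
  have h5 (x : V) : b 5 (j x) = c 5 x := congrFun (h x) 5
  have h6 (x : V) : b 6 (j x) = I * c 5 x := congrFun (h x) 6
  ext x
  have hI' : (I * I + 1) * wedgeCov 4 ![c 2, c 3, c 4, c 5] x = 0 := by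
    rw [hI, neg_add_cancel, zero_mul]
  simp only [AlternatingMap.compLinearMap_apply, stdG2, bw, AlternatingMap.add_apply,
    AlternatingMap.sub_apply, wedgeCov_four_apply, h0, h1, h2, h3, h4, h5, h6] at hI' ⊢
  linear_combination hI'

theorem exists_basis_compLinearMap_stdG2_eq [FiniteDimensional K E] {I : K} (hI : I * I = -1)
    {ν : Dual K E} (hν : ν ≠ 0) {j : V →ₗ[K] E} (hinj : Function.Injective j)
    (hj : LinearMap.range j = LinearMap.ker ν) (c : Basis (Fin 6) K (Dual K V)) :
    ∃ b : Basis (Fin 7) K (Dual K E), (stdG2 b).compLinearMap j =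
      wedgeCov 4 ![c 0, c 1, c 2, c 3] + wedgeCov 4 ![c 0, c 1, c 4, c 5] := by
  choose d hd using fun i ↦ LinearMap.dualMap_surjective_of_injective hinj (c i)
  let b : Fin 7 → Dual K E :=
    ![d 0 + I • d 2, d 1 - I • d 3, d 2, d 3, d 4, d 5, I • (d 5 - ν)]
  let S := Submodule.span K (Set.range b)
  have hb (i : Fin 7) : b i ∈ S := Submodule.subset_span (Set.mem_range_self i)
  have hdS : ∀ i, d i ∈ S := by
    have h0 : d 0 = b 0 - I • b 2 := (add_sub_cancel_right _ _).symm
    have h1 : d 1 = b 1 + I • b 3 := (sub_add_cancel _ _).symm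
    intro i
    fin_cases i
    · exact h0 ▸ sub_mem (hb 0) (S.smul_mem I (hb 2))
    · exact h1 ▸ add_mem (hb 1) (S.smul_mem I (hb 3))
    exacts [hb 2, hb 3, hb 4, hb 5]
  have hνS : ν ∈ S := by
    have h : ν = b 5 + I • b 6 := by simp [b, smul_smul, hI]
    exact h ▸ add_mem (hb 5) (S.smul_mem I (hb 6))
  have hS : S = ⊤ := by
    refine eq_top_of_mem_of_map_dualMap_eq_top hj hνS (top_unique ?_)
    rw [← c.span_eq, Submodule.span_le]
    rintro _ ⟨i, rfl⟩
    exact ⟨d i, hdS i, hd i⟩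
  have hdim : Fintype.card (Fin 7) = finrank K (Dual K E) := by
    rw [Subspace.dual_finrank_eq, ← Dual.finrank_ker_add_one_of_ne_zero hν, ← hj,
      LinearMap.finrank_range_of_inj hinj, ← Subspace.dual_finrank_eq, finrank_eq_card_basis c]
    rfl
  refine ⟨basisOfTopLeSpanOfCardEqFinrank b hS.ge hdim, compLinearMap_stdG2_eq hI fun x ↦ ?_⟩
  have hdj (i : Fin 6) : d i (j x) = c i x := LinearMap.congr_fun (hd i) x
  have hνj : ν (j x) = 0 := LinearMap.mem_ker.mp (hj ▸ LinearMap.mem_range_self j x)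
  ext i
  rw [coe_basisOfTopLeSpanOfCardEqFinrank]
  fin_cases i <;> simp [b, hdj, hνj]

end NormalForm

section Converse

variable {K E : Type*} [Field K] [AddCommGroup E] [Module K E] {A : Module.End K E} {t : K}

theorem covWedge_covWedge_eq_zero_of_forall [FiniteDimensional K E] {n : ℕ} {α β : Dual K E}
    {ρ : E [⋀^Fin n]→ₗ[K] K} (h : ∀ x : Fin n → E, (∀ i, α (x i) = 0 ∧ β (x i) = 0) → ρ x = 0) :
    covWedge α (covWedge β ρ) = 0 :=
  covWedge_eq_zero_of_forall_ker fun _ hx ↦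
    covWedge_apply_eq_zero_of_mem (p := LinearMap.ker α) h hx

theorem derivAct_covWedge_covWedge_eq_smul [FiniteDimensional K E] {n : ℕ} {α β : Dual K E}
    {a b c d : K} (hα : α ∘ₗ A = a • α + b • β) (hβ : β ∘ₗ A = c • α + d • β)
    {τ : E [⋀^Fin (n + 1)]→ₗ[K] K}
    (hτ : ∀ x : Fin (n + 1) → E, (∀ i, α (x i) = 0 ∧ β (x i) = 0) → derivAct A τ x = t * τ x) :
    derivAct A (covWedge α (covWedge β τ)) = (a + d + t) • covWedge α (covWedge β τ) := by
  have hτ' : covWedge α (covWedge β (derivAct A τ - t • τ)) = 0 :=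
    covWedge_covWedge_eq_zero_of_forall fun x hx ↦ by
      rw [AlternatingMap.sub_apply, AlternatingMap.smul_apply, hτ x hx, smul_eq_mul, sub_self]
  rw [map_sub, map_sub, map_smul, map_smul, sub_eq_zero] at hτ'
  simp only [derivAct_covWedge, hα, hβ, map_add, map_smul, LinearMap.add_apply,
    LinearMap.smul_apply, hτ', covWedge_covWedge_self, smul_zero, add_zero, zero_add]
  module

theorem trace_eq_trace_add_trace [FiniteDimensional K E] {U W : Submodule K E} (h : IsCompl U W)
    (A : Module.End K E) :
    LinearMap.trace K E A =
      LinearMap.trace K U (U.projectionOnto W h ∘ₗ A ∘ₗ U.subtype) +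
        LinearMap.trace K W (W.projectionOnto U h.symm ∘ₗ A ∘ₗ W.subtype) := by
  have hid : U.subtype ∘ₗ U.projectionOnto W h + W.subtype ∘ₗ W.projectionOnto U h.symm =
      LinearMap.id := by
    ext x
    exact Submodule.projection_add_projection_eq_self h x
  rw [← LinearMap.comp_assoc, ← LinearMap.comp_assoc, LinearMap.trace_comp_comm' U.subtype,
    LinearMap.trace_comp_comm' W.subtype, ← map_add (LinearMap.trace K E),
    ← LinearMap.comp_assoc, ← LinearMap.comp_assoc, ← LinearMap.add_comp, hid, LinearMap.id_comp]

theorem exists_basis_eq_wedgeCov {ω : LinearMap.BilinForm K E} (hω : ω.IsAlt)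
    (hnd : ω.Nondegenerate) (hE : finrank K E = 4) :
    ∃ b : Basis (Fin 4) K E, ∀ x : Fin 2 → E,
      (wedgeCov 2 ![b.coord 0, b.coord 1] + wedgeCov 2 ![b.coord 2, b.coord 3]) x =
        ω (x 0) (x 1) := by
  have : FiniteDimensional K E := .of_finrank_pos (by omega)
  obtain ⟨n, b, hb⟩ := exists_basis_toMatrix_eq_J hω hnd
  obtain rfl : n = 2 := by
    rw [finrank_eq_card_basis b, Fintype.card_sum, Fintype.card_fin] at hE
    omega
  let σ : Fin 2 ⊕ Fin 2 ≃ Fin 4 :=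
    ⟨Sum.elim ![1, 3] ![0, 2], ![.inr 0, .inl 0, .inr 1, .inl 1], by decide, by decide⟩
  refine ⟨b.reindex σ, fun x ↦ ?_⟩
  rw [LinearMap.BilinForm.apply_eq_dotProduct_toMatrix_mulVec b ω, hb]
  simp only [AlternatingMap.add_apply, wedgeCov_apply, Matrix.det_fin_two, Matrix.of_apply,
    Matrix.cons_val, Basis.coord_apply, Basis.repr_reindex_apply, σ, Equiv.symm_mk,
    Equiv.coe_fn_mk, Matrix.J, Matrix.mulVec, dotProduct, Fintype.sum_sum_type, Fin.sum_univ_two,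
    Matrix.fromBlocks_apply₁₁, Matrix.fromBlocks_apply₁₂, Matrix.fromBlocks_apply₂₁,
    Matrix.fromBlocks_apply₂₂, Matrix.zero_apply, Matrix.neg_apply, Matrix.one_apply,
    ↓reduceIte, zero_ne_one, one_ne_zero]
  ring

theorem wedgeCov_four_add_wedgeCov_four (α β γ δ γ' δ' : Dual K E) :
    wedgeCov 4 ![α, β, γ, δ] + wedgeCov 4 ![α, β, γ', δ'] =
      covWedge α (covWedge β (wedgeCov 2 ![γ, δ] + wedgeCov 2 ![γ', δ'])) := by
  simp only [map_add, covWedge_wedgeCov]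

theorem derivAct_eq_smul_of_bilinForm {ω : LinearMap.BilinForm K E} {η : E [⋀^Fin 2]→ₗ[K] K}
    (hη : ∀ x, η x = ω (x 0) (x 1)) (hA : ∀ x y, ω (A x) y + ω x (A y) = t * ω x y) :
    derivAct A η = t • η := by
  ext x
  simpa [derivAct_apply, hη] using hA (x 0) (x 1)

theorem coord_comp_projectionOnto_comp {ι : Type*} [Fintype ι] [DecidableEq ι]
    {U W : Submodule K E} (h : IsCompl U W) (hW : ∀ x ∈ W, A x ∈ W) (b : Basis ι K U) (i : ι) :
    (b.coord i ∘ₗ U.projectionOnto W h) ∘ₗ A =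
      ∑ j, LinearMap.toMatrix b b (U.projectionOnto W h ∘ₗ A ∘ₗ U.subtype) i j •
        (b.coord j ∘ₗ U.projectionOnto W h) := by
  ext x
  have hx := Submodule.projection_add_projection_eq_self h x
  have hPx : U.projectionOnto W h (A x) =
      (U.projectionOnto W h ∘ₗ A ∘ₗ U.subtype) (U.projectionOnto W h x) := by
    conv_lhs => rw [← hx, map_add, map_add, Submodule.projectionOnto_apply_of_mem_right h
      (hW _ (Submodule.projection_apply_mem h.symm x)), add_zero]
    rfl
  rw [LinearMap.comp_apply, LinearMap.comp_apply, hPx, Basis.coord_apply,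
    ← LinearMap.toMatrix_mulVec_repr b b]
  simp [Matrix.mulVec, dotProduct]

theorem exists_dual_basis_of_isCompl {U W : Submodule K E} (h : IsCompl U W) {m n : ℕ}
    (bU : Basis (Fin m) K U) (bW : Basis (Fin n) K W) :
    ∃ c : Basis (Fin (m + n)) K (Dual K E), ⇑c =
      Fin.append (fun i ↦ bU.coord i ∘ₗ U.projectionOnto W h)
        (fun i ↦ bW.coord i ∘ₗ W.projectionOnto U h.symm) := by
  refine ⟨(((bU.prod bW).map (Submodule.prodEquivOfIsCompl U W h)).reindex
    finSumFinEquiv).dualBasis, ?_⟩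
  ext i x
  exact Fin.addCases (fun i ↦ by simp) (fun i ↦ by simp) i

theorem derivAct_compLinearMap_projectionOnto_apply {n : ℕ} {U W : Submodule K E}
    (h : IsCompl W U) (hW : ∀ x ∈ W, A x ∈ W) {η : W [⋀^Fin (n + 1)]→ₗ[K] K}
    (hη : derivAct (A.restrict hW) η = t • η) {x : Fin (n + 1) → E} (hx : ∀ i, x i ∈ W) :
    derivAct A (η.compLinearMap (W.projectionOnto U h)) x =
      t * η.compLinearMap (W.projectionOnto U h) x := by
  have hres : (η.compLinearMap (W.projectionOnto U h)).compLinearMap W.subtype = η := by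
    ext y
    simp
  have hact : (derivAct A (η.compLinearMap (W.projectionOnto U h))).compLinearMap W.subtype =
      t • (η.compLinearMap (W.projectionOnto U h)).compLinearMap W.subtype := by
    rw [compLinearMap_derivAct (A := A.restrict hW) (j := W.subtype) (fun _ ↦ rfl), hres, hη]
  exact DFunLike.congr_fun hact fun i ↦ ⟨x i, hx i⟩

theorem IsConfSymplectic.trace_eq_trace_add_two_mul [FiniteDimensional K E] (h2 : (2 : K) ≠ 0)
    {U W : Submodule K E} (h : IsCompl U W) {hW : ∀ x ∈ W, A x ∈ W} (hW4 : finrank K W = 4)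
    (hA : IsConfSymplectic (A.restrict hW) t) :
    LinearMap.trace K E A =
      LinearMap.trace K U (U.projectionOnto W h ∘ₗ A ∘ₗ U.subtype) + 2 * t := by
  have hrestrict : W.projectionOnto U h.symm ∘ₗ A ∘ₗ W.subtype = A.restrict hW :=
    LinearMap.ext fun x ↦ Submodule.projectionOnto_apply_left h.symm (A.restrict hW x)
  have htr := hA.two_mul_trace
  rw [hW4] at htr
  push_cast at htr
  rw [trace_eq_trace_add_trace h, hrestrict, add_right_inj]
  refine mul_left_cancel₀ h2 ?_
  linear_combination htr

theorem exists_basis_derivAct_eq_zero (h2 : (2 : K) ≠ 0) (hE : finrank K E = 6)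
    (h : HasConfSymplecticSubspace A 4 (LinearMap.trace K E A)) :
    ∃ c : Basis (Fin 6) K (Dual K E),
      derivAct A (wedgeCov 4 ![c 0, c 1, c 2, c 3] + wedgeCov 4 ![c 0, c 1, c 4, c 5]) = 0 := by
  have : FiniteDimensional K E := .of_finrank_pos (by omega)
  obtain ⟨W, hW, hW4, hA⟩ := h
  obtain ⟨U, hUW⟩ := W.exists_isCompl
  have htr := hA.trace_eq_trace_add_two_mul h2 hUW.symm hW4
  obtain ⟨ω, hω, hnd, hA⟩ := hA
  obtain ⟨bW, hbW⟩ := exists_basis_eq_wedgeCov hω hnd hW4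
  have hU : finrank K U = 2 := by
    have := Submodule.finrank_add_eq_of_isCompl hUW
    omega
  let bU := finBasisOfFinrankEq K U hU
  obtain ⟨c, hc⟩ := exists_dual_basis_of_isCompl hUW.symm bU bW
  let P := U.projectionOnto W hUW.symm
  let Q := W.projectionOnto U hUW
  let η := (wedgeCov 2 ![bW.coord 0, bW.coord 1] +
    wedgeCov 2 ![bW.coord 2, bW.coord 3]).compLinearMap Q
  have hη : η = wedgeCov 2 ![bW.coord 0 ∘ₗ Q, bW.coord 1 ∘ₗ Q] +
      wedgeCov 2 ![bW.coord 2 ∘ₗ Q, bW.coord 3 ∘ₗ Q] := by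
    ext x
    simp [η, wedgeCov_apply, Matrix.det_fin_two]
  have hcη : wedgeCov 4 ![c 0, c 1, c 2, c 3] + wedgeCov 4 ![c 0, c 1, c 4, c 5] =
      covWedge (bU.coord 0 ∘ₗ P) (covWedge (bU.coord 1 ∘ₗ P) η) := by
    rw [wedgeCov_four_add_wedgeCov_four, hc, hη]
    rfl
  have hAη (x : Fin 2 → E)
      (hx : ∀ i, (bU.coord 0 ∘ₗ P) (x i) = 0 ∧ (bU.coord 1 ∘ₗ P) (x i) = 0) :
      derivAct A η x = LinearMap.trace K E A * η x := by
    refine derivAct_compLinearMap_projectionOnto_apply hUW hW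
      (derivAct_eq_smul_of_bilinForm hbW hA) fun i ↦ ?_
    rw [← Submodule.projectionOnto_apply_eq_zero_iff hUW.symm, ← bU.forall_coord_eq_zero_iff,
      Fin.forall_fin_two]
    exact hx i
  have hP := coord_comp_projectionOnto_comp hUW.symm hW bU
  simp only [Fin.sum_univ_two] at hP
  refine ⟨c, hcη ▸ (derivAct_covWedge_covWedge_eq_smul (hP 0) (hP 1) hAη).trans ?_⟩
  rw [LinearMap.trace_eq_matrix_trace K bU, Matrix.trace_fin_two] at htr
  convert zero_smul K _
  linear_combination -htr

end Converse

section Similarity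

variable {K E : Type*} [Field K] [AddCommGroup E] [Module K E] [FiniteDimensional K E]

theorem exists_linearEquiv_extend {W W' : Submodule K E} (φ : W ≃ₗ[K] W') :
    ∃ T : E ≃ₗ[K] E, ∀ x : W, T x = φ x := by
  obtain ⟨U, hU⟩ := W.exists_isCompl
  obtain ⟨U', hU'⟩ := W'.exists_isCompl
  have hdim : finrank K U = finrank K U' := by
    have h := Submodule.finrank_add_eq_of_isCompl hU
    rw [φ.finrank_eq, ← Submodule.finrank_add_eq_of_isCompl hU'] at h
    exact Nat.add_left_cancel h
  let ψ := LinearEquiv.ofFinrankEq U U' hdim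
  exact ⟨(Submodule.prodEquivOfIsCompl W U hU).symm ≪≫ₗ φ.prodCongr ψ ≪≫ₗ
    Submodule.prodEquivOfIsCompl W' U' hU', fun x ↦ by simp⟩

theorem exists_skew_iff_forall_apply_add_apply_eq_trace_mul (h2 : (2 : K) ≠ 0)
    {U W : Submodule K E} (h : IsCompl U W) (hW4 : finrank K W = 4) {ω : LinearMap.BilinForm K W}
    (hω : ω.IsAlt) (hnd : ω.Nondegenerate) {f : Module.End K E} (hW : ∀ x ∈ W, f x ∈ W) :
    (∃ s : Module.End K W, (∀ x y, ω (s x) y + ω x (s y) = 0) ∧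
      ∀ x : W, W.projectionOnto U h.symm (f x) =
        -(LinearMap.trace K U (U.projectionOnto W h ∘ₗ f ∘ₗ U.subtype) / 2) • x + s x) ↔
      ∀ x y, ω (f.restrict hW x) y + ω x (f.restrict hW y) = LinearMap.trace K E f * ω x y := by
  set τ := LinearMap.trace K U (U.projectionOnto W h ∘ₗ f ∘ₗ U.subtype)
  have hf (x : W) : W.projectionOnto U h.symm (f x) = f.restrict hW x :=
    Submodule.projectionOnto_apply_left h.symm (f.restrict hW x)
  have hτ2 : τ / 2 + τ / 2 = τ := by rw [← mul_two, div_mul_cancel₀ _ h2]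
  simp only [hf]
  constructor
  · rintro ⟨s, hs, hfs⟩
    have hA (x y : W) : ω (f.restrict hW x) y + ω x (f.restrict hW y) = -τ * ω x y := by
      simp only [hfs, map_add, map_smul, LinearMap.add_apply, LinearMap.smul_apply, smul_eq_mul]
      linear_combination hs x y - ω x y * hτ2
    have htr := IsConfSymplectic.trace_eq_trace_add_two_mul h2 h hW4 ⟨ω, hω, hnd, hA⟩
    rwa [show LinearMap.trace K E f = -τ by linear_combination htr]
  · intro hA
    have htr := IsConfSymplectic.trace_eq_trace_add_two_mul h2 h hW4 ⟨ω, hω, hnd, hA⟩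
    refine ⟨f.restrict hW + (τ / 2) • LinearMap.id, fun x y ↦ ?_, fun x ↦ ?_⟩
    · simp only [map_add, map_smul, LinearMap.add_apply, LinearMap.smul_apply, LinearMap.id_apply,
        smul_eq_mul]
      linear_combination hA x y + ω x y * hτ2 - ω x y * htr
    · simp

theorem hasConfSymplecticSubspace_finrank_iff_exists_conj {A : Module.End K E} {t : K}
    {W : Submodule K E} {ω : LinearMap.BilinForm K W} (hω : ω.IsAlt) (hnd : ω.Nondegenerate) :
    HasConfSymplecticSubspace A (finrank K W) t ↔
      ∃ (T : E ≃ₗ[K] E) (hW : ∀ x ∈ W, T.conj A x ∈ W), ∀ x y,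
        ω ((T.conj A).restrict hW x) y + ω x ((T.conj A).restrict hW y) = t * ω x y := by
  constructor
  · rintro ⟨W', hW', hd, ω', hω', hnd', hA⟩
    obtain ⟨φ, hφ⟩ := exists_linearEquiv_isometry hω' hnd' hω hnd hd
    obtain ⟨T, hT⟩ := exists_linearEquiv_extend φ
    have hconj (x : W') : T.conj A (φ x) = φ (A.restrict hW' x) := by
      rw [← hT, LinearEquiv.conj_apply_apply, LinearEquiv.symm_apply_apply, ← hT]
      rfl
    have hW : ∀ x ∈ W, T.conj A x ∈ W := fun x hx ↦ by
      obtain ⟨y, hy⟩ := φ.surjective ⟨x, hx⟩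
      have h := hconj y
      rw [hy] at h
      exact h ▸ Subtype.coe_prop _
    have hres (x : W') : (T.conj A).restrict hW (φ x) = φ (A.restrict hW' x) :=
      Subtype.ext (hconj x)
    refine ⟨T, hW, fun x y ↦ ?_⟩
    obtain ⟨x, rfl⟩ := φ.surjective x
    obtain ⟨y, rfl⟩ := φ.surjective y
    rw [hres, hres, hφ, hφ, hφ, hA]
  · rintro ⟨T, hW, hA⟩
    have h : HasConfSymplecticSubspace (T.conj A) (finrank K W) t := ⟨W, hW, rfl, ω, hω, hnd, hA⟩
    exact h.map (j := T.symm) T.symm.injective fun x ↦ by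
      simp [LinearEquiv.conj_apply_apply]

end Similarity

section LieAlgebra

variable {K g : Type*} [Field K] [LieRing g] [LieAlgebra K g]

theorem exists_dual_ker_eq_and_lie_eq {u : LieIdeal K g}
    (habel : ∀ x ∈ u, ∀ y ∈ u, ⁅x, y⁆ = (0 : g)) (hu : finrank K g = finrank K u + 1) {e : g}
    (he : e ∉ u) :
    ∃ ν : Dual K g, ν ≠ 0 ∧ LinearMap.ker ν = u.toSubmodule ∧
      ∀ x y : g, ⁅x, y⁆ = ν x • ⁅e, y⁆ - ν y • ⁅e, x⁆ := by
  have : FiniteDimensional K g := .of_finrank_pos (by omega)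
  obtain ⟨μ, hμ, hle⟩ := Submodule.exists_le_ker_of_notMem (p := u.toSubmodule) he
  let ν : Dual K g := (μ e)⁻¹ • μ
  have hνe : ν e = 1 := inv_mul_cancel₀ hμ
  have hν : ν ≠ 0 := fun h ↦ by simp [h] at hνe
  have hker : LinearMap.ker ν = u.toSubmodule := by
    have hd := Dual.finrank_ker_add_one_of_ne_zero hν
    refine (Submodule.eq_of_le_of_finrank_eq (fun x hx ↦ ?_) ?_).symm
    · rw [LinearMap.mem_ker, LinearMap.smul_apply, LinearMap.mem_ker.mp (hle hx), smul_zero]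
    · exact Nat.add_right_cancel (hu.symm.trans hd.symm)
  have hmem (x : g) : x - ν x • e ∈ u := by
    rw [← LieSubmodule.mem_toSubmodule, ← hker, LinearMap.mem_ker, map_sub, map_smul, hνe,
      smul_eq_mul, mul_one, sub_self]
  refine ⟨ν, hν, hker, fun x y ↦ ?_⟩
  have h := habel _ (hmem x) _ (hmem y)
  simp only [sub_lie, lie_sub, smul_lie, lie_smul, lie_self, smul_zero, sub_zero] at h
  rw [← lie_skew x e] at h
  rw [← sub_eq_zero, ← h]
  module

theorem exists_closed_stdG2_iff_hasConfSymplecticSubspace [IsAlgClosed K] (h2 : (2 : K) ≠ 0)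
    (hg : finrank K g = 7) {u : LieIdeal K g} (habel : ∀ x ∈ u, ∀ y ∈ u, ⁅x, y⁆ = (0 : g))
    (hu : finrank K u = 6) {e : g} (he : e ∉ u) {A : u →ₗ[K] u}
    (hA : ∀ x, (A x : g) = ⁅e, (x : g)⁆) :
    (∃ Ψ : g [⋀^Fin 4]→ₗ[K] K, ceDiff 3 ⇑Ψ = 0 ∧
      ∃ b : Basis (Fin 7) K (Dual K g), Ψ = stdG2 b) ↔
      HasConfSymplecticSubspace A 4 (LinearMap.trace K u A) := by
  have : FiniteDimensional K g := .of_finrank_pos (by omega)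
  obtain ⟨ν, hν, hker, hbr⟩ := exists_dual_ker_eq_and_lie_eq habel (by omega) he
  let j : u →ₗ[K] g := u.toSubmodule.subtype
  have hj : LinearMap.range j = LinearMap.ker ν := u.toSubmodule.range_subtype.trans hker.symm
  have hclosed (Ψ : g [⋀^Fin 4]→ₗ[K] K) : ceDiff 3 Ψ = 0 ↔ derivAct A (Ψ.compLinearMap j) = 0 :=
    ceDiff_eq_zero_iff (D := LieAlgebra.ad K g e) hν hbr hj hA Ψ
  constructor
  · rintro ⟨_, hΨ, b, rfl⟩
    exact hasConfSymplecticSubspace_four_of_derivAct_stdG2_eq_zero h2 b hν hj hu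
      ((hclosed _).mp hΨ)
  · intro h
    obtain ⟨I, hI⟩ := IsAlgClosed.exists_pow_nat_eq (-1 : K) zero_lt_two
    obtain ⟨c, hc⟩ := exists_basis_derivAct_eq_zero h2 hu h
    obtain ⟨b, hb⟩ := exists_basis_compLinearMap_stdG2_eq (by rw [← sq, hI]) hν
      (Submodule.subtype_injective _) hj c
    exact ⟨stdG2 b, (hclosed _).mpr (hb ▸ hc), b, rfl⟩

end LieAlgebra

theorem stmt18_general {K g : Type*} [Field K] [IsAlgClosed K] (hK : (2 : K) ≠ 0) [LieRing g]
    [LieAlgebra K g] (hg : finrank K g = 7)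
    (u : LieIdeal K g) (habel : ∀ x ∈ u, ∀ y ∈ u, ⁅x, y⁆ = (0 : g))
    (hu : finrank K ↥u = 6) (e₇ : g) (he : e₇ ∉ u)
    (V₂ V₄ : Submodule K ↥u) (hc : IsCompl V₂ V₄) (h4 : finrank K ↥V₄ = 4)
    (ω : ↥V₄ →ₗ[K] ↥V₄ →ₗ[K] K) (halt : ∀ v : ↥V₄, ω v v = 0)
    (hnd : ∀ v : ↥V₄, (∀ w : ↥V₄, ω v w = 0) → v = 0)
    (adE : ↥u →ₗ[K] ↥u) (hadE : ∀ x : ↥u, (adE x : g) = ⁅e₇, (x : g)⁆) :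
    (∃ Ψ : g [⋀^Fin 4]→ₗ[K] K, ceDiff 3 ⇑Ψ = 0 ∧
        ∃ b : Basis (Fin 7) K (Module.Dual K g), Ψ = stdG2 b) ↔
      ∃ T : ↥u ≃ₗ[K] ↥u, ∃ f : ↥u →ₗ[K] ↥u,
        f = T.toLinearMap ∘ₗ adE ∘ₗ T.symm.toLinearMap ∧
        (∀ x : ↥u, x ∈ V₄ → f x ∈ V₄) ∧
        ∃ f₄ : ↥V₄ →ₗ[K] ↥V₄,
          (∀ x y : ↥V₄, ω (f₄ x) y + ω x (f₄ y) = 0) ∧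
          ∀ x : ↥V₄,
            V₄.projectionOnto V₂ hc.symm (f ↑x) =
              -(LinearMap.trace K ↥V₂ (V₂.projectionOnto V₄ hc ∘ₗ f ∘ₗ V₂.subtype) / 2) • x +
                f₄ x := by
  have : FiniteDimensional K u := .of_finrank_pos (by omega)
  have hω : LinearMap.BilinForm.IsAlt ω := halt
  have hω' : LinearMap.BilinForm.Nondegenerate ω :=
    hω.isRefl.nondegenerate_iff_separatingLeft.mpr hnd
  rw [exists_closed_stdG2_iff_hasConfSymplecticSubspace hK hg habel hu he hadE,
    ← h4, hasConfSymplecticSubspace_finrank_iff_exists_conj hω hω']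
  refine exists_congr fun T ↦ ?_
  rw [exists_eq_left, ← exists_prop, ← LinearMap.trace_conj' adE T]
  exact exists_congr fun hV₄ ↦
    (exists_skew_iff_forall_apply_add_apply_eq_trace_mul hK hc h4 hω hω' hV₄).symm

/-- Let `g` be a seven-dimensional complex Lie algebra with a
six-dimensional (complex) abelian ideal `u`, `e₇ ∈ g ∖ u`, `u = V₂ ⊕ V₄` with
`dim V₂ = 2`, `dim V₄ = 4`, and let `ω ∈ Λ²V₄*` be a nondegenerate complex two-form.
Then `g` admits a cocalibrated `(G₂)_ℂ`-structure (a closed four-form of the standard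
type `stdG2`) iff `ad(e₇)|_u` is similar under `GL(u)` to an element of the set
`S = {f : f(V₄) ⊆ V₄, pr_{V₄} ∘ f|_{V₄} = -(tr f₂ / 2)·id + f₄, f₄ ∈ sp(V₄,ω)}`,
where `f₂ := pr_{V₂} ∘ f|_{V₂}`. -/
theorem stmt18 {g : Type*} [LieRing g] [LieAlgebra ℂ g] [FiniteDimensional ℂ g]
    (hg : finrank ℂ g = 7)
    (u : LieIdeal ℂ g) (habel : ∀ x ∈ u, ∀ y ∈ u, ⁅x, y⁆ = (0 : g))
    (hu : finrank ℂ ↥u = 6) (e₇ : g) (he : e₇ ∉ u)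
    (V₂ V₄ : Submodule ℂ ↥u) (hc : IsCompl V₂ V₄)
    (h2 : finrank ℂ ↥V₂ = 2) (h4 : finrank ℂ ↥V₄ = 4)
    (ω : ↥V₄ →ₗ[ℂ] ↥V₄ →ₗ[ℂ] ℂ) (halt : ∀ v : ↥V₄, ω v v = 0)
    (hnd : ∀ v : ↥V₄, (∀ w : ↥V₄, ω v w = 0) → v = 0)
    (adE : ↥u →ₗ[ℂ] ↥u) (hadE : ∀ x : ↥u, (adE x : g) = ⁅e₇, (x : g)⁆) :
    (∃ Ψ : g [⋀^Fin 4]→ₗ[ℂ] ℂ, ceDiff 3 ⇑Ψ = 0 ∧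
        ∃ b : Basis (Fin 7) ℂ (Module.Dual ℂ g), Ψ = stdG2 b) ↔
      ∃ T : ↥u ≃ₗ[ℂ] ↥u, ∃ f : ↥u →ₗ[ℂ] ↥u,
        f = T.toLinearMap ∘ₗ adE ∘ₗ T.symm.toLinearMap ∧
        (∀ x : ↥u, x ∈ V₄ → f x ∈ V₄) ∧
        ∃ f₄ : ↥V₄ →ₗ[ℂ] ↥V₄,
          (∀ x y : ↥V₄, ω (f₄ x) y + ω x (f₄ y) = 0) ∧
          ∀ x : ↥V₄,
            (V₄.linearProjOfIsCompl V₂ hc.symm) (f ↑x) =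
              -((LinearMap.trace ℂ ↥V₂)
                  ((V₂.linearProjOfIsCompl V₄ hc) ∘ₗ f ∘ₗ V₂.subtype) / 2) • x +
                f₄ x :=
  stmt18_general two_ne_zero hg u habel hu e₇ he V₂ V₄ hc h4 ω halt hnd adE hadE
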